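/- arXiv:2402.18143 — 6 statements merged into one kernel-verified Lean document; each statement's English description precedes it below -/
import Mathlib

section
/- Let a > 0, let f ∈ C^∞(ℝ), and let v₀ ∈ L¹([0,∞)) ∩ L^∞([0,∞)). Then the problem (E) has at most one weak solution: if v₁ and v₂ are both weak solutions of (E), then for every t > 0 one has v₁(·,t) = v₂(·,t) almost everywhere on [0,∞). -/
open MeasureTheory Set

/-- A weak solution of problem (E): `v_t = (f(v))_x + a v_xx` on `(0,∞)×(0,∞)`,
`v(0,t) = 1` for `t > 0`, `v(·,0) = v₀`, in the sense of the test-function identity. -/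
def IsWeakSolutionE (a : ℝ) (f v₀ : ℝ → ℝ) (v : ℝ → ℝ → ℝ) : Prop :=
  Measurable (Function.uncurry v) ∧
  (∀ x : ℝ, v x 0 = v₀ x) ∧
  (∀ T : ℝ, ∃ C : ℝ,
    ∀ t ∈ Icc (0:ℝ) T,
      (∀ᵐ x ∂(volume.restrict (Ici (0:ℝ))), |v x t| ≤ C) ∧
      (∫ x in Ici (0:ℝ), |v x t|) ≤ C) ∧
  (∀ t : ℝ, 0 < t → ∀ φ : ℝ → ℝ,
    ContDiff ℝ (⊤ : ℕ∞) φ → HasCompactSupport φ → φ 0 = 0 →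
    (∫ x in Ici (0:ℝ), v x t * φ x) - (∫ x in Ici (0:ℝ), v₀ x * φ x)
      = -(∫ s in (0:ℝ)..t, ∫ x in Ici (0:ℝ), f (v x s) * deriv φ x)
        + a * (∫ s in (0:ℝ)..t, ∫ x in Ici (0:ℝ), v x s * deriv (deriv φ) x)
        + a * deriv φ 0 * t)

/-!
Truncated to `[-c, c]`, where `c` bounds both solutions up to time `T`, the difference
`w = v₁ - v₂` solves `w_t = g_x + a w_xx` on the half-line with zero initial and boundary data,
where `g = f(v₁) - f(v₂)` satisfies `|g| ≤ L |w|`. Extending `w` oddly and `g` evenly removes the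
boundary: testing the extensions against `φ` amounts to testing `w` and `g` against
`φ(x) - φ(-x)`, which vanishes at `0`. On the line, mollify in `x`, so that the equation holds
pointwise, and test it with the mollified solution times the Cauchy density `η`. Since `|η'| ≤ η`,
no decay of `w` is needed: completing squares bounds the growth of `∫ w² η` by a multiple of
`∫ (w² + g²) η`. Removing the mollification and using `|g| ≤ L |w|`, Grönwall's inequality gives
`w = 0`.
-/

open Filter ProbabilityTheory
open ContinuousLinearMap (lsmul)
open scoped Topology Convolution

/-- A measurable real function that is bounded everywhere, not merely almost everywhere: the class
stable under slicing, products and convolution in which all regularised quantities live. -/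
structure IsBddMeasurable {α : Type*} [MeasurableSpace α] (h : α → ℝ) : Prop where
  measurable : Measurable h
  exists_bound : ∃ M : ℝ, ∀ x, |h x| ≤ M

namespace IsBddMeasurable

variable {α β : Type*} [MeasurableSpace α] [MeasurableSpace β] {h k : α → ℝ}

lemma comp (hh : IsBddMeasurable h) {m : β → α} (hm : Measurable m) :
    IsBddMeasurable fun y ↦ h (m y) := by
  obtain ⟨M, hM⟩ := hh.exists_bound
  exact ⟨hh.measurable.comp hm, M, fun y ↦ hM (m y)⟩

lemma slice_left {H : α → β → ℝ} (hH : IsBddMeasurable (Function.uncurry H)) (x : α) :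
    IsBddMeasurable (H x) :=
  hH.comp measurable_prodMk_left

lemma slice_right {H : α → β → ℝ} (hH : IsBddMeasurable (Function.uncurry H)) (y : β) :
    IsBddMeasurable fun x ↦ H x y :=
  hH.comp measurable_prodMk_right

lemma continuous_comp (hh : IsBddMeasurable h) {f : ℝ → ℝ} (hf : Continuous f) :
    IsBddMeasurable fun x ↦ f (h x) := by
  obtain ⟨M, hM⟩ := hh.exists_bound
  obtain ⟨B, hB⟩ := isCompact_Icc.exists_bound_of_continuousOn (hf.continuousOn (s := Icc (-M) M))
  exact ⟨hf.measurable.comp hh.measurable, B, fun x ↦ hB _ (abs_le.1 (hM x))⟩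

lemma add (hh : IsBddMeasurable h) (hk : IsBddMeasurable k) :
    IsBddMeasurable fun x ↦ h x + k x := by
  obtain ⟨M, hM⟩ := hh.exists_bound
  obtain ⟨N, hN⟩ := hk.exists_bound
  exact ⟨hh.measurable.add hk.measurable, M + N,
    fun x ↦ (abs_add_le _ _).trans (add_le_add (hM x) (hN x))⟩

lemma mul (hh : IsBddMeasurable h) (hk : IsBddMeasurable k) :
    IsBddMeasurable fun x ↦ h x * k x := by
  obtain ⟨M, hM⟩ := hh.exists_bound
  obtain ⟨N, hN⟩ := hk.exists_bound
  refine ⟨hh.measurable.mul hk.measurable, M * N, fun x ↦ ?_⟩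
  rw [abs_mul]
  exact mul_le_mul (hM x) (hN x) (abs_nonneg _) ((abs_nonneg _).trans (hM x))

lemma const_mul (hh : IsBddMeasurable h) (c : ℝ) : IsBddMeasurable fun x ↦ c * h x :=
  hh.continuous_comp (continuous_const_mul c)

lemma sub (hh : IsBddMeasurable h) (hk : IsBddMeasurable k) :
    IsBddMeasurable fun x ↦ h x - k x := by
  simpa only [sub_eq_add_neg] using hh.add (hk.continuous_comp continuous_neg)

lemma sq (hh : IsBddMeasurable h) : IsBddMeasurable fun x ↦ h x ^ 2 :=
  hh.continuous_comp (continuous_pow 2)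

lemma integrable_mul (hh : IsBddMeasurable h) {μ : Measure α} (hk : Integrable k μ) :
    Integrable (fun x ↦ h x * k x) μ := by
  obtain ⟨M, hM⟩ := hh.exists_bound
  exact hk.bdd_mul hh.measurable.aestronglyMeasurable (ae_of_all _ hM)

lemma integral_sub_mul (hh : IsBddMeasurable h) (hk : IsBddMeasurable k) {μ : Measure α}
    {φ : α → ℝ} (hφ : Integrable φ μ) :
    ∫ x, (h x - k x) * φ x ∂μ = ∫ x, h x * φ x ∂μ - ∫ x, k x * φ x ∂μ := by
  simp only [sub_mul, integral_sub (hh.integrable_mul hφ) (hk.integrable_mul hφ)]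

lemma integrable (hh : IsBddMeasurable h) (μ : Measure α) [IsFiniteMeasure μ] :
    Integrable h μ := by
  simpa using hh.integrable_mul (integrable_const (1 : ℝ) (μ := μ))

lemma intervalIntegrable {h : ℝ → ℝ} (hh : IsBddMeasurable h) (s t : ℝ) :
    IntervalIntegrable h volume s t :=
  ⟨hh.integrable _, hh.integrable _⟩

lemma locallyIntegrable {h : ℝ → ℝ} (hh : IsBddMeasurable h) : LocallyIntegrable h := by
  obtain ⟨M, hM⟩ := hh.exists_bound
  exact (locallyIntegrable_const M).mono hh.measurable.aestronglyMeasurable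
    (ae_of_all _ fun x ↦ (hM x).trans (le_abs_self M))

lemma integral_mul {H : α → β → ℝ} (hH : IsBddMeasurable (Function.uncurry H)) {μ : Measure β}
    [SFinite μ] {k : β → ℝ} (hk : Integrable k μ) (hkm : Measurable k) :
    IsBddMeasurable fun x ↦ ∫ y, H x y * k y ∂μ := by
  obtain ⟨M, hM⟩ := hH.exists_bound
  have hHk : Measurable (Function.uncurry fun x y ↦ H x y * k y) :=
    hH.measurable.mul (hkm.comp measurable_snd)
  refine ⟨hHk.stronglyMeasurable.integral_prod_right.measurable, ∫ y, M * |k y| ∂μ, fun x ↦ ?_⟩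
  rw [← Real.norm_eq_abs]
  refine norm_integral_le_of_norm_le (hk.abs.const_mul M) (ae_of_all _ fun y ↦ ?_)
  rw [norm_mul]
  exact mul_le_mul_of_nonneg_right (hM (x, y)) (norm_nonneg _)

lemma integral {H : α → β → ℝ} (hH : IsBddMeasurable (Function.uncurry H)) (μ : Measure β)
    [IsFiniteMeasure μ] : IsBddMeasurable fun x ↦ ∫ y, H x y ∂μ := by
  simpa using hH.integral_mul (integrable_const (1 : ℝ) (μ := μ)) measurable_const

lemma convolution {H : α → ℝ → ℝ} (hH : IsBddMeasurable (Function.uncurry H)) {k : ℝ → ℝ}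
    (hk : Continuous k) (hkc : HasCompactSupport k) :
    IsBddMeasurable (Function.uncurry fun s ↦ k ⋆[lsmul ℝ ℝ] H s) := by
  have hshift : IsBddMeasurable (Function.uncurry fun (p : α × ℝ) (t : ℝ) ↦ H p.1 (p.2 - t)) :=
    hH.comp (m := fun q : (α × ℝ) × ℝ ↦ (q.1.1, q.1.2 - q.2)) (by fun_prop)
  have hkint : Integrable k := hk.integrable_of_hasCompactSupport hkc
  have hconv := hshift.integral_mul hkint hk.measurable
  simpa only [Function.uncurry_def, convolution_def, ContinuousLinearMap.lsmul_apply, smul_eq_mul,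
    mul_comm] using hconv

end IsBddMeasurable

section TimeIntegration

lemma le_mul_pow_div_factorial_of_le_mul_integral {y : ℝ → ℝ} {a b M K : ℝ} (hK : 0 ≤ K)
    (hy₀ : ∀ t, 0 ≤ y t) (hyM : ∀ t ∈ Ioc a b, y t ≤ M)
    (hy : ∀ t ∈ Ioc a b, y t ≤ K * ∫ s in a..t, y s) (n : ℕ) :
    ∀ t ∈ Ioc a b, y t ≤ M * ((K * (t - a)) ^ n / n.factorial) := by
  induction n with
  | zero => simpa using hyM
  | succ n ih =>
    intro t ht
    have hcont : Continuous fun s ↦ M * ((K * (s - a)) ^ n / n.factorial) := by fun_prop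
    have hle : ∫ s in a..t, y s ≤ ∫ s in a..t, M * ((K * (s - a)) ^ n / n.factorial) := by
      rw [intervalIntegral.integral_of_le ht.1.le, intervalIntegral.integral_of_le ht.1.le]
      refine integral_mono_of_nonneg (ae_of_all _ hy₀) (hcont.intervalIntegrable a t).1 ?_
      filter_upwards [ae_restrict_mem measurableSet_Ioc] with s hs
      exact ih s ⟨hs.1, hs.2.trans ht.2⟩
    calc y t ≤ K * ∫ s in a..t, y s := hy t ht
      _ ≤ K * ∫ s in a..t, M * ((K * (s - a)) ^ n / n.factorial) := by gcongr
      _ = M * ((K * (t - a)) ^ (n + 1) / (n + 1).factorial) := by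
        simp only [mul_pow, intervalIntegral.integral_const_mul, intervalIntegral.integral_div,
          intervalIntegral.integral_comp_sub_right (fun s ↦ s ^ n), integral_pow, sub_self,
          Nat.factorial_succ]
        push_cast
        have := n.factorial_ne_zero
        field_simp
        ring

lemma eqOn_zero_of_le_mul_integral {y : ℝ → ℝ} {a b M K : ℝ} (hK : 0 ≤ K)
    (hy₀ : ∀ t, 0 ≤ y t) (hyM : ∀ t ∈ Ioc a b, y t ≤ M)
    (hy : ∀ t ∈ Ioc a b, y t ≤ K * ∫ s in a..t, y s) : EqOn y 0 (Ioc a b) := by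
  intro t ht
  have hlim : Tendsto (fun n : ℕ ↦ M * ((K * (t - a)) ^ n / n.factorial)) atTop (𝓝 0) := by
    simpa using (FloorSemiring.tendsto_pow_div_factorial_atTop (K * (t - a))).const_mul M
  exact le_antisymm (ge_of_tendsto' hlim fun n ↦
    le_mul_pow_div_factorial_of_le_mul_integral hK hy₀ hyM hy n t ht) (hy₀ t)

lemma sq_intervalIntegral_eq {b : ℝ → ℝ} {t₀ t : ℝ} (hb : IntervalIntegrable b volume t₀ t) :
    (∫ s in t₀..t, b s) ^ 2 = ∫ s in t₀..t, 2 * ((∫ r in t₀..s, b r) * b s) := by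
  have hac : AbsolutelyContinuousOnInterval (fun s ↦ ∫ r in t₀..s, b r) t₀ t :=
    hb.absolutelyContinuousOnInterval_intervalIntegral left_mem_uIcc
  have hparts := hac.integral_deriv_mul_eq_sub hac
  rw [intervalIntegral.integral_same, mul_zero, sub_zero] at hparts
  rw [sq, ← hparts]
  refine intervalIntegral.integral_congr_ae ?_
  filter_upwards [hb.ae_hasDerivAt_integral] with s hs hst
  rw [(hs (uIoc_subset_uIcc hst) t₀ left_mem_uIcc).deriv]
  ring

lemma integral_sq_eq_of_eq_intervalIntegral {α : Type*} [MeasurableSpace α] (ν : Measure α)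
    [IsFiniteMeasure ν] {u b : ℝ → α → ℝ} (hu : IsBddMeasurable (Function.uncurry u))
    (hb : IsBddMeasurable (Function.uncurry b)) {t₀ t : ℝ} (ht : t₀ < t)
    (hub : ∀ s ∈ Ioc t₀ t, ∀ x, u s x = ∫ r in t₀..s, b r x) :
    ∫ x, u t x ^ 2 ∂ν = ∫ s in t₀..t, ∫ x, 2 * (u s x * b s x) ∂ν := by
  have hsq (x : α) : u t x ^ 2 = ∫ s in t₀..t, 2 * (u s x * b s x) := by
    rw [hub t (right_mem_Ioc.2 ht) x,
      sq_intervalIntegral_eq ((hb.slice_right x).intervalIntegrable t₀ t)]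
    refine intervalIntegral.integral_congr_ae (ae_of_all _ fun s hs ↦ ?_)
    rw [uIoc_of_le ht.le] at hs
    rw [hub s hs x]
  have : IsFiniteMeasure (volume.restrict (uIoc t₀ t)) :=
    inferInstanceAs (IsFiniteMeasure (volume.restrict (Ioc _ _)))
  simp_rw [hsq]
  exact (intervalIntegral_integral_swap (((hu.mul hb).const_mul 2).integrable _)).symm

end TimeIntegration

section WeightedEnergy

lemma two_mul_abs_mul_sub_le {a : ℝ} (ha : 0 < a) (u p g : ℝ) :
    2 * |u * (g + a * p)| - 2 * (p * (g + a * p)) ≤ (a + a⁻¹ + 1) * (u ^ 2 + g ^ 2) := by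
  have hsquares (σ : ℝ) (hσ : σ ^ 2 = 1) :
      (a + a⁻¹ + 1) * (u ^ 2 + g ^ 2) - (2 * (σ * (u * (g + a * p))) - 2 * (p * (g + a * p)))
        = a⁻¹ * (g + a * p) ^ 2 + a * (p - σ * u) ^ 2 + (u - σ * g) ^ 2
          + a⁻¹ * u ^ 2 + a * g ^ 2 := by
    field_simp
    linear_combination -(g ^ 2 + a * u ^ 2) * a * hσ
  have hnonneg (σ : ℝ) : 0 ≤ a⁻¹ * (g + a * p) ^ 2 + a * (p - σ * u) ^ 2 + (u - σ * g) ^ 2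
      + a⁻¹ * u ^ 2 + a * g ^ 2 := by positivity
  rcases abs_choice (u * (g + a * p)) with habs | habs
  · linarith [hsquares 1 (by norm_num), hnonneg 1]
  · linarith [hsquares (-1) (by norm_num), hnonneg (-1)]

lemma neg_two_mul_weighted_flux_le {a : ℝ} (ha : 0 < a) {e e' : ℝ} (he : |e'| ≤ e) (u p g : ℝ) :
    -(2 * ((p * e + u * e') * (g + a * p))) ≤ (a + a⁻¹ + 1) * ((u ^ 2 + g ^ 2) * e) := by
  have he₀ : 0 ≤ e := (abs_nonneg _).trans he
  have hboundary : -(u * (g + a * p) * e') ≤ |u * (g + a * p)| * e :=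
    calc -(u * (g + a * p) * e') ≤ |u * (g + a * p) * e'| := neg_le_abs _
      _ = |u * (g + a * p)| * |e'| := abs_mul _ _
      _ ≤ |u * (g + a * p)| * e := by gcongr
  linarith [mul_le_mul_of_nonneg_right (two_mul_abs_mul_sub_le ha u p g) he₀]

variable {η : ℝ → ℝ} {u u' F F' : ℝ → ℝ}

lemma integrable_deriv_of_abs_le (hη : Integrable η) (hη' : ∀ x, |deriv η x| ≤ η x) :
    Integrable (deriv η) :=
  hη.mono' (measurable_deriv η).aestronglyMeasurable (ae_of_all _ hη')

lemma integral_mul_deriv_mul_weight (hη : Integrable η) (hηd : Differentiable ℝ η)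
    (hη' : Integrable (deriv η))
    (hu : ∀ x, HasDerivAt u (u' x) x) (hF : ∀ x, HasDerivAt F (F' x) x)
    (hub : IsBddMeasurable u) (hub' : IsBddMeasurable u')
    (hFb : IsBddMeasurable F) (hFb' : IsBddMeasurable F') :
    ∫ x, u x * F' x * η x = -∫ x, (u' x * η x + u x * deriv η x) * F x := by
  have hparts := integral_mul_deriv_eq_deriv_mul_of_integrable
    (u := fun x ↦ u x * η x) (u' := fun x ↦ u' x * η x + u x * deriv η x) (v := F) (v' := F')
    (fun x _ ↦ (hu x).mul (hηd x).hasDerivAt) (fun x _ ↦ hF x)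
    (((hub.mul hFb').integrable_mul hη).congr
      (ae_of_all _ fun x ↦ by simp only [Pi.mul_apply]; ring))
    ((((hub'.mul hFb).integrable_mul hη).add ((hub.mul hFb).integrable_mul hη')).congr
      (ae_of_all _ fun x ↦ by simp only [Pi.add_apply, Pi.mul_apply]; ring))
    (((hub.mul hFb).integrable_mul hη).congr
      (ae_of_all _ fun x ↦ by simp only [Pi.mul_apply]; ring))
  rw [← hparts]
  congr with x
  ring

lemma integral_two_mul_flux_deriv_mul_weight_le {a : ℝ} (ha : 0 < a) {g : ℝ → ℝ}
    (hη : Integrable η) (hηd : Differentiable ℝ η) (hη' : ∀ x, |deriv η x| ≤ η x)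
    (hu : ∀ x, HasDerivAt u (u' x) x) (hF : ∀ x, HasDerivAt (fun y ↦ g y + a * u' y) (F' x) x)
    (hub : IsBddMeasurable u) (hub' : IsBddMeasurable u') (hgb : IsBddMeasurable g)
    (hFb' : IsBddMeasurable F') :
    ∫ x, 2 * (u x * F' x) * η x ≤ (a + a⁻¹ + 1) * ∫ x, (u x ^ 2 + g x ^ 2) * η x := by
  have hFb : IsBddMeasurable fun x ↦ g x + a * u' x := hgb.add (hub'.const_mul a)
  have hηi' := integrable_deriv_of_abs_le hη hη'
  have hint : Integrable fun x ↦ (u' x * η x + u x * deriv η x) * (g x + a * u' x) :=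
    (((hub'.mul hFb).integrable_mul hη).add ((hub.mul hFb).integrable_mul hηi')).congr
      (ae_of_all _ fun x ↦ by simp only [Pi.add_apply]; ring)
  calc ∫ x, 2 * (u x * F' x) * η x
      = 2 * ∫ x, u x * F' x * η x := by rw [← integral_const_mul]; simp only [mul_assoc]
    _ = ∫ x, -(2 * ((u' x * η x + u x * deriv η x) * (g x + a * u' x))) := by
      rw [integral_mul_deriv_mul_weight hη hηd hηi' hu hF hub hub' hFb hFb', integral_neg,
        integral_const_mul, mul_neg]
    _ ≤ ∫ x, (a + a⁻¹ + 1) * ((u x ^ 2 + g x ^ 2) * η x) :=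
      integral_mono (hint.const_mul 2).neg (((hub.sq.add hgb.sq).integrable_mul hη).const_mul _)
        fun x ↦ neg_two_mul_weighted_flux_le ha (hη' x) (u x) (u' x) (g x)
    _ = (a + a⁻¹ + 1) * ∫ x, (u x ^ 2 + g x ^ 2) * η x := integral_const_mul _ _

lemma hasDerivAt_cauchyPDFReal (x : ℝ) :
    HasDerivAt (cauchyPDFReal 0 1) (-(Real.pi⁻¹ * (2 * x) / (x ^ 2 + 1) ^ 2)) x := by
  have hsq : HasDerivAt (fun y : ℝ ↦ y ^ 2 + 1) (2 * x) x := by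
    simpa using (hasDerivAt_pow 2 x).add_const 1
  have hpdf : cauchyPDFReal 0 1 = fun y ↦ Real.pi⁻¹ * (y ^ 2 + 1)⁻¹ := by
    ext y
    simp [cauchyPDFReal_def]
  rw [hpdf]
  exact ((hsq.fun_inv (by positivity)).const_mul Real.pi⁻¹).congr_deriv (by ring)

lemma abs_deriv_cauchyPDFReal_le (x : ℝ) :
    |deriv (cauchyPDFReal 0 1) x| ≤ cauchyPDFReal 0 1 x := by
  have hx : |2 * x| ≤ x ^ 2 + 1 := abs_le.2 ⟨by nlinarith [sq_nonneg (x + 1)],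
    by nlinarith [sq_nonneg (x - 1)]⟩
  have hpos : 0 < x ^ 2 + 1 := by positivity
  rw [(hasDerivAt_cauchyPDFReal x).deriv, abs_neg, abs_div, abs_mul,
    abs_of_pos (inv_pos.2 Real.pi_pos), abs_of_pos (pow_pos hpos 2), div_le_iff₀ (by positivity)]
  calc Real.pi⁻¹ * |2 * x| ≤ Real.pi⁻¹ * (x ^ 2 + 1) := by gcongr
    _ = cauchyPDFReal 0 1 x * (x ^ 2 + 1) ^ 2 := by
      simp only [cauchyPDFReal_def, sub_zero, NNReal.coe_one, one_pow]
      field_simp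

lemma integral_cauchyMeasure (x₀ : ℝ) {γ : NNReal} (hγ : γ ≠ 0) (h : ℝ → ℝ) :
    ∫ x, h x ∂cauchyMeasure x₀ γ = ∫ x, h x * cauchyPDFReal x₀ γ x := by
  rw [cauchyMeasure_of_scale_ne_zero x₀ hγ, integral_withDensity_eq_integral_toReal_smul
    (measurable_cauchyPDF x₀ γ) (ae_of_all _ fun x ↦ ENNReal.ofReal_lt_top)]
  simp only [cauchyPDF_def, ENNReal.toReal_ofReal (cauchyPDF_pos x₀ hγ _).le, smul_eq_mul, mul_comm]

lemma cauchyMeasure_absolutelyContinuous (x₀ : ℝ) {γ : NNReal} (hγ : γ ≠ 0) :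
    cauchyMeasure x₀ γ ≪ volume := by
  rw [cauchyMeasure_of_scale_ne_zero x₀ hγ]
  exact withDensity_absolutelyContinuous _ _

lemma absolutelyContinuous_cauchyMeasure (x₀ : ℝ) {γ : NNReal} (hγ : γ ≠ 0) :
    volume ≪ cauchyMeasure x₀ γ := by
  rw [cauchyMeasure_of_scale_ne_zero x₀ hγ]
  exact withDensity_absolutelyContinuous' (measurable_cauchyPDF x₀ γ).aemeasurable
    (ae_of_all _ fun x ↦ (ENNReal.ofReal_pos.2 (cauchyPDF_pos x₀ hγ x)).ne')

/-- The energy `∫ h² η`, with weight `η` the density of the standard Cauchy distribution. -/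
noncomputable def weightedEnergy (h : ℝ → ℝ) : ℝ :=
  ∫ x, h x ^ 2 ∂cauchyMeasure 0 1

lemma weightedEnergy_nonneg (h : ℝ → ℝ) : 0 ≤ weightedEnergy h :=
  integral_nonneg fun x ↦ sq_nonneg (h x)

lemma weightedEnergy_le_sq {h : ℝ → ℝ} {M : ℝ} (hM : ∀ x, |h x| ≤ M) :
    weightedEnergy h ≤ M ^ 2 := by
  have hsq (x : ℝ) : ‖h x ^ 2‖ ≤ M ^ 2 := by
    rw [Real.norm_of_nonneg (sq_nonneg _)]
    exact sq_le_sq.2 ((hM x).trans (le_abs_self M))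
  simpa [weightedEnergy] using (le_abs_self _).trans
    (norm_integral_le_of_norm_le_const (μ := cauchyMeasure 0 1) (ae_of_all _ hsq))

lemma ae_eq_zero_of_weightedEnergy_eq_zero {h : ℝ → ℝ} (hh : IsBddMeasurable h)
    (h₀ : weightedEnergy h = 0) : ∀ᵐ x, h x = 0 := by
  have hsq := (integral_eq_zero_iff_of_nonneg (fun x ↦ sq_nonneg (h x)) (hh.sq.integrable _)).1 h₀
  filter_upwards [(absolutelyContinuous_cauchyMeasure 0 one_ne_zero).ae_le hsq] with x hx
  exact pow_eq_zero_iff two_ne_zero |>.1 hx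

lemma weightedEnergy_le_of_abs_le {g h : ℝ → ℝ} {L : ℝ} (hg : IsBddMeasurable g)
    (hh : IsBddMeasurable h) (hgh : ∀ x, |g x| ≤ L * |h x|) :
    weightedEnergy g ≤ L ^ 2 * weightedEnergy h := by
  rw [weightedEnergy, weightedEnergy, ← integral_const_mul]
  refine integral_mono (hg.sq.integrable _) ((hh.sq.integrable _).const_mul _) fun x ↦ ?_
  calc g x ^ 2 = |g x| ^ 2 := (sq_abs _).symm
    _ ≤ (L * |h x|) ^ 2 := by gcongr; exact hgh x
    _ = L ^ 2 * h x ^ 2 := by rw [mul_pow, sq_abs]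

lemma IsBddMeasurable.weightedEnergy {α : Type*} [MeasurableSpace α] {H : α → ℝ → ℝ}
    (hH : IsBddMeasurable (Function.uncurry H)) : IsBddMeasurable fun s ↦ weightedEnergy (H s) :=
  IsBddMeasurable.integral (H := fun s x ↦ H s x ^ 2) hH.sq _

lemma integral_two_mul_flux_deriv_cauchyMeasure_le {a : ℝ} (ha : 0 < a) {g : ℝ → ℝ}
    (hu : ∀ x, HasDerivAt u (u' x) x) (hF : ∀ x, HasDerivAt (fun y ↦ g y + a * u' y) (F' x) x)
    (hub : IsBddMeasurable u) (hub' : IsBddMeasurable u') (hgb : IsBddMeasurable g)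
    (hFb' : IsBddMeasurable F') :
    ∫ x, 2 * (u x * F' x) ∂cauchyMeasure 0 1
      ≤ (a + a⁻¹ + 1) * (weightedEnergy u + weightedEnergy g) := by
  rw [weightedEnergy, weightedEnergy, ← integral_add (hub.sq.integrable _) (hgb.sq.integrable _),
    integral_cauchyMeasure 0 one_ne_zero, integral_cauchyMeasure 0 one_ne_zero]
  exact integral_two_mul_flux_deriv_mul_weight_le ha (integrable_cauchyPDFReal 0)
    (fun x ↦ (hasDerivAt_cauchyPDFReal x).differentiableAt) abs_deriv_cauchyPDFReal_le
    hu hF hub hub' hgb hFb'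

end WeightedEnergy

section Mollification

/-- Bump functions at `0` with radii tending to `0` at a fixed ratio, as Lebesgue differentiation
requires. -/
noncomputable def shrinkingBump (n : ℕ) : ContDiffBump (0 : ℝ) where
  rIn := 1 / ((n : ℝ) + 1)
  rOut := 2 / ((n : ℝ) + 1)
  rIn_pos := by positivity
  rIn_lt_rOut := by gcongr; norm_num

/-- A sequence of smooth, compactly supported probability densities concentrating at `0`. -/
noncomputable def mollifier (n : ℕ) : ℝ → ℝ := (shrinkingBump n).normed volume

lemma ae_tendsto_mollifier_convolution {h : ℝ → ℝ} (hh : LocallyIntegrable h) :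
    ∀ᵐ x, Tendsto (fun n ↦ (mollifier n ⋆[lsmul ℝ ℝ] h) x) atTop (𝓝 (h x)) := by
  refine ContDiffBump.ae_convolution_tendsto_right_of_locallyIntegrable (φ := shrinkingBump)
    (K := 2) ?_ (Eventually.of_forall fun n ↦ ?_) hh
  · simpa [shrinkingBump, div_eq_mul_inv] using
      (tendsto_one_div_add_atTop_nhds_zero_nat (𝕜 := ℝ)).const_mul 2
  · simp [shrinkingBump, div_eq_mul_inv]

lemma abs_mollifier_convolution_le {h : ℝ → ℝ} {M : ℝ} (hM : ∀ x, |h x| ≤ M) (n : ℕ) (x : ℝ) :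
    |(mollifier n ⋆[lsmul ℝ ℝ] h) x| ≤ M := by
  have hmass : ∫ t, M * mollifier n t = M := by
    rw [integral_const_mul, mollifier, ContDiffBump.integral_normed, mul_one]
  rw [← Real.norm_eq_abs, convolution_def, ← hmass]
  refine norm_integral_le_of_norm_le ((shrinkingBump n).integrable_normed.const_mul M)
    (ae_of_all _ fun t ↦ ?_)
  have hnonneg : 0 ≤ mollifier n t := (shrinkingBump n).nonneg_normed t
  rw [ContinuousLinearMap.lsmul_apply, norm_smul, Real.norm_of_nonneg hnonneg, mul_comm]
  exact mul_le_mul_of_nonneg_right (hM _) hnonneg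

lemma IsBddMeasurable.mollifier_convolution {α : Type*} [MeasurableSpace α] {H : α → ℝ → ℝ}
    (hH : IsBddMeasurable (Function.uncurry H)) (n : ℕ) :
    IsBddMeasurable (Function.uncurry fun s ↦ mollifier n ⋆[lsmul ℝ ℝ] H s) :=
  hH.convolution (shrinkingBump n).continuous_normed (shrinkingBump n).hasCompactSupport_normed

lemma tendsto_weightedEnergy_mollifier_convolution {h : ℝ → ℝ} (hh : IsBddMeasurable h) :
    Tendsto (fun n ↦ weightedEnergy (mollifier n ⋆[lsmul ℝ ℝ] h)) atTop
      (𝓝 (weightedEnergy h)) := by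
  obtain ⟨M, hM⟩ := hh.exists_bound
  have hconv (n : ℕ) : IsBddMeasurable (mollifier n ⋆[lsmul ℝ ℝ] h) :=
    (IsBddMeasurable.mollifier_convolution (H := fun _ : Unit ↦ h)
      (hh.comp measurable_snd) n).slice_left ()
  refine tendsto_integral_of_dominated_convergence (fun _ ↦ M ^ 2)
    (fun n ↦ (hconv n).sq.measurable.aestronglyMeasurable) (integrable_const _)
    (fun n ↦ ae_of_all _ fun x ↦ ?_) ?_
  · rw [Real.norm_of_nonneg (sq_nonneg _)]
    exact sq_le_sq.2 ((abs_mollifier_convolution_le hM n x).trans (le_abs_self M))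
  · filter_upwards [(cauchyMeasure_absolutelyContinuous 0 one_ne_zero).ae_le
      (ae_tendsto_mollifier_convolution hh.locallyIntegrable)] with x hx
    exact hx.pow 2

lemma tendsto_intervalIntegral_weightedEnergy_mollifier_convolution {H : ℝ → ℝ → ℝ}
    (hH : IsBddMeasurable (Function.uncurry H)) (t₀ t : ℝ) :
    Tendsto (fun n ↦ ∫ s in t₀..t, weightedEnergy (mollifier n ⋆[lsmul ℝ ℝ] H s)) atTop
      (𝓝 (∫ s in t₀..t, weightedEnergy (H s))) := by
  obtain ⟨M, hM⟩ := hH.exists_bound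
  refine intervalIntegral.tendsto_integral_filter_of_dominated_convergence (fun _ ↦ M ^ 2)
    (Eventually.of_forall fun n ↦
      (hH.mollifier_convolution n).weightedEnergy.measurable.aestronglyMeasurable)
    (Eventually.of_forall fun n ↦ ae_of_all _ fun s _ ↦ ?_) intervalIntegrable_const
    (ae_of_all _ fun s _ ↦ tendsto_weightedEnergy_mollifier_convolution (hH.slice_left s))
  rw [Real.norm_of_nonneg (weightedEnergy_nonneg _)]
  exact weightedEnergy_le_sq (abs_mollifier_convolution_le (fun x ↦ hM (s, x)) n)

end Mollification

/-- `W` is a bounded weak solution of `W_t = G_x + a W_xx` on `Ω × (0, T]` with zero initial and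
boundary data, both arguments being in the order time, space. The boundary condition is encoded by
testing only against functions vanishing on `frontier Ω`. -/
structure IsDirichletWeakSolution (Ω : Set ℝ) (a T : ℝ) (G W : ℝ → ℝ → ℝ) : Prop where
  flux_bddMeasurable : IsBddMeasurable (Function.uncurry G)
  sol_bddMeasurable : IsBddMeasurable (Function.uncurry W)
  weak_eq : ∀ t ∈ Ioc 0 T, ∀ φ : ℝ → ℝ, ContDiff ℝ (⊤ : ℕ∞) φ → HasCompactSupport φ →
    (∀ x ∈ frontier Ω, φ x = 0) →
    ∫ x in Ω, W t x * φ x = ∫ s in (0 : ℝ)..t,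
      (-(∫ x in Ω, G s x * deriv φ x) + a * ∫ x in Ω, W s x * deriv (deriv φ) x)

/-- The time derivative `(ρ ∗ G)_x + a (ρ ∗ W)_xx` of the mollified solution `ρ ∗ W`, with the
space derivatives moved to `ρ`. -/
noncomputable def mollifiedRate (a : ℝ) (ρ : ℝ → ℝ) (G W : ℝ → ℝ → ℝ) (s x : ℝ) : ℝ :=
  (deriv ρ ⋆[lsmul ℝ ℝ] G s) x + a * (deriv (deriv ρ) ⋆[lsmul ℝ ℝ] W s) x

namespace IsDirichletWeakSolution

section Line

variable {a T : ℝ} {G W : ℝ → ℝ → ℝ} {ρ : ℝ → ℝ}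

lemma mollifiedRate_bddMeasurable (h : IsDirichletWeakSolution univ a T G W)
    (hρ : ContDiff ℝ (⊤ : ℕ∞) ρ) (hρc : HasCompactSupport ρ) :
    IsBddMeasurable (Function.uncurry (mollifiedRate a ρ G W)) := by
  have hρ' : ContDiff ℝ (⊤ : ℕ∞) (deriv ρ) := hρ.deriv'
  have hρ'' : ContDiff ℝ (⊤ : ℕ∞) (deriv (deriv ρ)) := hρ'.deriv'
  exact (h.flux_bddMeasurable.convolution hρ'.continuous hρc.deriv).add
    ((h.sol_bddMeasurable.convolution hρ''.continuous hρc.deriv.deriv).const_mul a)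

lemma convolution_eq_integral_mollifiedRate (h : IsDirichletWeakSolution univ a T G W)
    (hρ : ContDiff ℝ (⊤ : ℕ∞) ρ) (hρc : HasCompactSupport ρ) {t : ℝ} (ht : t ∈ Ioc 0 T) (x : ℝ) :
    (ρ ⋆[lsmul ℝ ℝ] W t) x = ∫ s in (0 : ℝ)..t, mollifiedRate a ρ G W s x := by
  have hderiv (k : ℝ → ℝ) : deriv (fun y ↦ k (x - y)) = fun y ↦ -deriv k (x - y) :=
    funext fun y ↦ deriv_comp_const_sub ..
  have hderiv₂ : deriv (fun y ↦ -deriv ρ (x - y)) = fun y ↦ deriv (deriv ρ) (x - y) := by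
    rw [deriv.fun_neg', hderiv]
    simp only [neg_neg]
  have hweak := h.weak_eq t ht (fun y ↦ ρ (x - y)) (hρ.comp (by fun_prop))
    (hρc.comp_homeomorph (Homeomorph.subLeft x)) (by simp)
  simp only [hderiv ρ, hderiv₂, mul_neg, integral_neg, neg_neg, setIntegral_univ] at hweak
  simpa only [mollifiedRate, convolution_lsmul_swap, smul_eq_mul, mul_comm] using hweak

lemma integral_two_mul_convolution_mollifiedRate_le (h : IsDirichletWeakSolution univ a T G W)
    (ha : 0 < a) (hρ : ContDiff ℝ (⊤ : ℕ∞) ρ) (hρc : HasCompactSupport ρ) (s : ℝ) :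
    ∫ x, 2 * ((ρ ⋆[lsmul ℝ ℝ] W s) x * mollifiedRate a ρ G W s x) ∂cauchyMeasure 0 1
      ≤ (a + a⁻¹ + 1) *
        (weightedEnergy (ρ ⋆[lsmul ℝ ℝ] W s) + weightedEnergy (ρ ⋆[lsmul ℝ ℝ] G s)) := by
  have hρ₁ : ContDiff ℝ 1 ρ := hρ.of_le (by exact_mod_cast le_top)
  have hρ' : ContDiff ℝ (⊤ : ℕ∞) (deriv ρ) := hρ.deriv'
  have hρ₂ : ContDiff ℝ 1 (deriv ρ) := hρ'.of_le (by exact_mod_cast le_top)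
  have hW := (h.sol_bddMeasurable.slice_left s).locallyIntegrable
  have hG := (h.flux_bddMeasurable.slice_left s).locallyIntegrable
  exact integral_two_mul_flux_deriv_cauchyMeasure_le ha
    (fun x ↦ hρc.hasDerivAt_convolution_left _ hρ₁ hW x)
    (fun x ↦ (hρc.hasDerivAt_convolution_left _ hρ₁ hG x).add
      ((hρc.deriv.hasDerivAt_convolution_left _ hρ₂ hW x).const_mul a))
    ((h.sol_bddMeasurable.convolution hρ.continuous hρc).slice_left s)
    ((h.sol_bddMeasurable.convolution hρ₂.continuous hρc.deriv).slice_left s)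
    ((h.flux_bddMeasurable.convolution hρ.continuous hρc).slice_left s)
    ((h.mollifiedRate_bddMeasurable hρ hρc).slice_left s)

lemma weightedEnergy_convolution_le (h : IsDirichletWeakSolution univ a T G W) (ha : 0 < a)
    (hρ : ContDiff ℝ (⊤ : ℕ∞) ρ) (hρc : HasCompactSupport ρ) {t : ℝ} (ht : t ∈ Ioc 0 T) :
    weightedEnergy (ρ ⋆[lsmul ℝ ℝ] W t) ≤ (a + a⁻¹ + 1) *
      ((∫ s in (0 : ℝ)..t, weightedEnergy (ρ ⋆[lsmul ℝ ℝ] W s)) +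
        ∫ s in (0 : ℝ)..t, weightedEnergy (ρ ⋆[lsmul ℝ ℝ] G s)) := by
  have hu := h.sol_bddMeasurable.convolution hρ.continuous hρc
  have hg := h.flux_bddMeasurable.convolution hρ.continuous hρc
  have hb := h.mollifiedRate_bddMeasurable hρ hρc
  have hEu := hu.weightedEnergy.intervalIntegrable 0 t
  have hEg := hg.weightedEnergy.intervalIntegrable 0 t
  have hprod : IsBddMeasurable fun s ↦
      ∫ x, 2 * ((ρ ⋆[lsmul ℝ ℝ] W s) x * mollifiedRate a ρ G W s x) ∂cauchyMeasure 0 1 :=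
    ((hu.mul hb).const_mul 2).integral _
  calc weightedEnergy (ρ ⋆[lsmul ℝ ℝ] W t)
      = ∫ s in (0 : ℝ)..t, ∫ x, 2 * ((ρ ⋆[lsmul ℝ ℝ] W s) x * mollifiedRate a ρ G W s x)
          ∂cauchyMeasure 0 1 :=
        integral_sq_eq_of_eq_intervalIntegral _ hu hb ht.1 fun s hs x ↦
          h.convolution_eq_integral_mollifiedRate hρ hρc ⟨hs.1, hs.2.trans ht.2⟩ x
    _ ≤ ∫ s in (0 : ℝ)..t, (a + a⁻¹ + 1) *
          (weightedEnergy (ρ ⋆[lsmul ℝ ℝ] W s) + weightedEnergy (ρ ⋆[lsmul ℝ ℝ] G s)) :=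
        intervalIntegral.integral_mono_on ht.1.le (hprod.intervalIntegrable 0 t)
          ((hEu.add hEg).const_mul _) fun s _ ↦
            h.integral_two_mul_convolution_mollifiedRate_le ha hρ hρc s
    _ = _ := by
        rw [intervalIntegral.integral_const_mul, intervalIntegral.integral_add hEu hEg]

lemma weightedEnergy_le (h : IsDirichletWeakSolution univ a T G W) (ha : 0 < a) {t : ℝ}
    (ht : t ∈ Ioc 0 T) :
    weightedEnergy (W t) ≤ (a + a⁻¹ + 1) *
      ((∫ s in (0 : ℝ)..t, weightedEnergy (W s)) + ∫ s in (0 : ℝ)..t, weightedEnergy (G s)) :=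
  le_of_tendsto_of_tendsto'
    (tendsto_weightedEnergy_mollifier_convolution (h.sol_bddMeasurable.slice_left t))
    (((tendsto_intervalIntegral_weightedEnergy_mollifier_convolution
      h.sol_bddMeasurable 0 t).add
      (tendsto_intervalIntegral_weightedEnergy_mollifier_convolution
        h.flux_bddMeasurable 0 t)).const_mul _)
    fun n ↦ h.weightedEnergy_convolution_le ha (shrinkingBump n).contDiff_normed
      (shrinkingBump n).hasCompactSupport_normed ht

lemma ae_eq_zero_of_abs_flux_le (h : IsDirichletWeakSolution univ a T G W) (ha : 0 < a) {L : ℝ}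
    (hGW : ∀ s x, |G s x| ≤ L * |W s x|) {t : ℝ} (ht : t ∈ Ioc 0 T) : ∀ᵐ x, W t x = 0 := by
  obtain ⟨M, hM⟩ := h.sol_bddMeasurable.exists_bound
  have hEW := h.sol_bddMeasurable.weightedEnergy
  have hEG := h.flux_bddMeasurable.weightedEnergy
  have hclosed (τ : ℝ) (hτ : τ ∈ Ioc 0 T) : weightedEnergy (W τ) ≤
      (a + a⁻¹ + 1) * (1 + L ^ 2) * ∫ s in (0 : ℝ)..τ, weightedEnergy (W s) := by
    have hflux : ∫ s in (0 : ℝ)..τ, weightedEnergy (G s)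
        ≤ L ^ 2 * ∫ s in (0 : ℝ)..τ, weightedEnergy (W s) := by
      rw [← intervalIntegral.integral_const_mul]
      exact intervalIntegral.integral_mono_on hτ.1.le (hEG.intervalIntegrable 0 τ)
        ((hEW.const_mul _).intervalIntegrable 0 τ) fun s _ ↦ weightedEnergy_le_of_abs_le
          (h.flux_bddMeasurable.slice_left s) (h.sol_bddMeasurable.slice_left s) (hGW s)
    rw [mul_assoc, one_add_mul]
    exact (h.weightedEnergy_le ha hτ).trans (by gcongr)
  have hzero := eqOn_zero_of_le_mul_integral (by positivity)
    (fun s ↦ weightedEnergy_nonneg (W s)) (fun s _ ↦ weightedEnergy_le_sq fun x ↦ hM (s, x))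
    hclosed ht
  exact ae_eq_zero_of_weightedEnergy_eq_zero (h.sol_bddMeasurable.slice_left t) hzero

end Line

end IsDirichletWeakSolution

section Reflection

/-- The extension of `h` from the half-line to the line that is even for `ε = 1` and odd for
`ε = -1`; the value at `0` is always `h 0`. -/
noncomputable def reflect (ε : ℝ) (h : ℝ → ℝ) (x : ℝ) : ℝ :=
  if 0 ≤ x then h x else ε * h (-x)

variable {ε : ℝ} {h k : ℝ → ℝ}

lemma reflect_of_nonneg {x : ℝ} (hx : 0 ≤ x) : reflect ε h x = h x := if_pos hx

lemma reflect_of_neg {x : ℝ} (hx : x < 0) : reflect ε h x = ε * h (-x) := if_neg hx.not_ge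

lemma abs_reflect (hε : |ε| = 1) (x : ℝ) : |reflect ε h x| = |h (|x|)| := by
  rcases le_or_gt 0 x with hx | hx
  · rw [reflect_of_nonneg hx, abs_of_nonneg hx]
  · rw [reflect_of_neg hx, abs_of_neg hx, abs_mul, hε, one_mul]

lemma IsBddMeasurable.reflect {α : Type*} [MeasurableSpace α] {H : α → ℝ → ℝ}
    (hH : IsBddMeasurable (Function.uncurry H)) (hε : |ε| = 1) :
    IsBddMeasurable (Function.uncurry fun s ↦ reflect ε (H s)) := by
  obtain ⟨M, hM⟩ := hH.exists_bound
  have hflip : Measurable fun p : α × ℝ ↦ (p.1, -p.2) := by fun_prop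
  refine ⟨Measurable.ite (measurable_snd measurableSet_Ici) hH.measurable
    ((hH.measurable.comp hflip).const_mul ε), M, fun p ↦ ?_⟩
  exact (abs_reflect hε p.2).trans_le (hM (p.1, |p.2|))

lemma integral_reflect_mul (hh : IsBddMeasurable h) (hε : |ε| = 1) (hk : Integrable k) :
    ∫ x, reflect ε h x * k x = ∫ x in Ici 0, h x * (k x + ε * k (-x)) := by
  have hrefl : IsBddMeasurable (reflect ε h) :=
    (IsBddMeasurable.reflect (H := fun _ : Unit ↦ h) (hh.comp measurable_snd) hε).slice_left ()
  have hpos : ∫ x in Ioi 0, reflect ε h x * k x = ∫ x in Ioi 0, h x * k x :=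
    setIntegral_congr_fun measurableSet_Ioi fun x hx ↦ by
      rw [mem_Ioi] at hx
      rw [reflect_of_nonneg hx.le]
  have hneg : ∫ x in Iic 0, reflect ε h x * k x = ∫ x in Ioi 0, h x * (ε * k (-x)) := by
    rw [← neg_zero, ← integral_comp_neg_Ioi, neg_zero]
    refine setIntegral_congr_fun measurableSet_Ioi fun x hx ↦ ?_
    rw [mem_Ioi] at hx
    rw [reflect_of_neg (neg_lt_zero.2 hx), neg_neg, mul_right_comm, mul_comm]
  rw [← integral_add_compl (measurableSet_Ioi (a := 0)) (hrefl.integrable_mul hk), compl_Ioi,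
    hpos, hneg, integral_Ici_eq_integral_Ioi,
    ← integral_add (hh.integrable_mul hk).integrableOn
      (hh.integrable_mul (hk.comp_neg.const_mul ε)).integrableOn]
  simp only [mul_add]

lemma deriv_add_const_mul_comp_neg (hk : Differentiable ℝ k) (ε : ℝ) :
    deriv (fun x ↦ k x + ε * k (-x)) = fun x ↦ deriv k x + -ε * deriv k (-x) := by
  ext x
  have hneg : DifferentiableAt ℝ (fun y ↦ k (-y)) x := by fun_prop
  rw [deriv_fun_add (hk x) (hneg.const_mul ε), deriv_const_mul_field, deriv_comp_neg]
  ring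

lemma hasCompactSupport_add_const_mul_comp_neg (hk : HasCompactSupport k) (ε : ℝ) :
    HasCompactSupport fun x ↦ k x + ε * k (-x) :=
  hk.add (hk.comp_homeomorph (Homeomorph.neg ℝ)).mul_left

end Reflection

namespace IsDirichletWeakSolution

variable {a T : ℝ} {g w : ℝ → ℝ → ℝ}

lemma reflection (h : IsDirichletWeakSolution (Ici 0) a T g w) :
    IsDirichletWeakSolution univ a T (fun s ↦ reflect 1 (g s)) fun s ↦ reflect (-1) (w s) where
  flux_bddMeasurable := h.flux_bddMeasurable.reflect abs_one
  sol_bddMeasurable := h.sol_bddMeasurable.reflect (by norm_num)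
  weak_eq t ht φ hφ hφc _ := by
    have hφ' : ContDiff ℝ (⊤ : ℕ∞) (deriv φ) := hφ.deriv'
    have hφ'' : ContDiff ℝ (⊤ : ℕ∞) (deriv (deriv φ)) := hφ'.deriv'
    have hderiv : deriv (fun x ↦ φ x + -1 * φ (-x)) = fun x ↦ deriv φ x + 1 * deriv φ (-x) := by
      rw [deriv_add_const_mul_comp_neg (hφ.differentiable (by simp)), neg_neg]
    have hodd := h.weak_eq t ht (fun x ↦ φ x + -1 * φ (-x))
      (hφ.add (contDiff_const.mul (hφ.comp contDiff_neg)))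
      (hasCompactSupport_add_const_mul_comp_neg hφc _) (by simp)
    have hw (s : ℝ) := h.sol_bddMeasurable.slice_left s
    have hg (s : ℝ) := h.flux_bddMeasurable.slice_left s
    have hneg_one : |(-1 : ℝ)| = 1 := by norm_num
    rw [hderiv, deriv_add_const_mul_comp_neg (hφ'.differentiable (by simp))] at hodd
    simp only [setIntegral_univ]
    simp_rw [integral_reflect_mul (hw _) hneg_one
        (hφ.continuous.integrable_of_hasCompactSupport hφc),
      integral_reflect_mul (hg _) abs_one
        (hφ'.continuous.integrable_of_hasCompactSupport hφc.deriv),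
      integral_reflect_mul (hw _) hneg_one
        (hφ''.continuous.integrable_of_hasCompactSupport hφc.deriv.deriv)]
    exact hodd

lemma ae_restrict_Ici_eq_zero_of_abs_flux_le (h : IsDirichletWeakSolution (Ici 0) a T g w)
    (ha : 0 < a) {L : ℝ} (hgw : ∀ s x, |g s x| ≤ L * |w s x|) {t : ℝ} (ht : t ∈ Ioc 0 T) :
    ∀ᵐ x ∂volume.restrict (Ici 0), w t x = 0 := by
  have hrefl (s x : ℝ) : |reflect 1 (g s) x| ≤ L * |reflect (-1) (w s) x| := by
    rw [abs_reflect abs_one, abs_reflect (by norm_num)]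
    exact hgw s |x|
  filter_upwards [ae_restrict_of_ae (h.reflection.ae_eq_zero_of_abs_flux_le ha hrefl ht),
    ae_restrict_mem measurableSet_Ici] with x hx hx₀
  rwa [reflect_of_nonneg hx₀] at hx

end IsDirichletWeakSolution

section Truncation

/-- The nearest point to `y` in `[-c, c]`; it turns an a.e. bounded function into an everywhere
bounded one. -/
noncomputable def truncate (c : NNReal) (y : ℝ) : ℝ :=
  projIcc (-c : ℝ) c (neg_le_self c.2) y

lemma truncate_mem_Icc (c : NNReal) (y : ℝ) : truncate c y ∈ Icc (-c : ℝ) c :=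
  Subtype.coe_prop _

lemma truncate_of_abs_le {c : NNReal} {y : ℝ} (hy : |y| ≤ c) : truncate c y = y := by
  rw [truncate, projIcc_of_mem _ (abs_le.1 hy)]

lemma isBddMeasurable_truncate {α : Type*} [MeasurableSpace α] (c : NNReal) {h : α → ℝ}
    (hh : Measurable h) : IsBddMeasurable fun x ↦ truncate c (h x) :=
  ⟨((continuous_subtype_val.comp continuous_projIcc).measurable).comp hh, c,
    fun x ↦ abs_le.2 (truncate_mem_Icc c (h x))⟩

end Truncation

namespace IsWeakSolutionE

variable {a T : ℝ} {f v₀ : ℝ → ℝ} {v v₁ v₂ : ℝ → ℝ → ℝ}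

lemma eventually_ae_abs_le (h : IsWeakSolutionE a f v₀ v) (T : ℝ) :
    ∀ᶠ c : NNReal in atTop, ∀ t ∈ Icc 0 T, ∀ᵐ x ∂volume.restrict (Ici 0), |v x t| ≤ c := by
  obtain ⟨-, -, hbdd, -⟩ := h
  obtain ⟨C, hC⟩ := hbdd T
  filter_upwards [eventually_ge_atTop C.toNNReal] with c hc t ht
  filter_upwards [(hC t ht).1] with x hx
  exact hx.trans (Real.toNNReal_le_iff_le_coe.1 hc)

lemma weak_eq_of_ae_eq (h : IsWeakSolutionE a f v₀ v) {p : ℝ → ℝ → ℝ}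
    (hp : ∀ s ∈ Icc 0 T, ∀ᵐ x ∂volume.restrict (Ici 0), p s x = v x s) {t : ℝ} (ht : t ∈ Ioc 0 T)
    {φ : ℝ → ℝ} (hφ : ContDiff ℝ (⊤ : ℕ∞) φ) (hφc : HasCompactSupport φ) (hφ₀ : φ 0 = 0) :
    (∫ x in Ici 0, p t x * φ x) - (∫ x in Ici 0, v₀ x * φ x)
      = -(∫ s in (0 : ℝ)..t, ∫ x in Ici 0, f (p s x) * deriv φ x)
        + a * (∫ s in (0 : ℝ)..t, ∫ x in Ici 0, p s x * deriv (deriv φ) x)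
        + a * deriv φ 0 * t := by
  have hslice (F : ℝ → ℝ) (k : ℝ → ℝ) (s : ℝ) (hs : s ∈ Icc 0 T) :
      ∫ x in Ici 0, F (p s x) * k x = ∫ x in Ici 0, F (v x s) * k x :=
    integral_congr_ae ((hp s hs).mono fun x hx ↦ by simp only [hx])
  have htime (F : ℝ → ℝ) (k : ℝ → ℝ) : ∫ s in (0 : ℝ)..t, ∫ x in Ici 0, F (p s x) * k x
      = ∫ s in (0 : ℝ)..t, ∫ x in Ici 0, F (v x s) * k x :=
    intervalIntegral.integral_congr fun s hs ↦ by
      rw [uIcc_of_le ht.1.le] at hs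
      exact hslice F k s ⟨hs.1, hs.2.trans ht.2⟩
  obtain ⟨-, -, -, hweak⟩ := h
  rw [hslice (fun y ↦ y) φ t ⟨ht.1.le, ht.2⟩, htime f, htime fun y ↦ y]
  exact hweak t ht.1 φ hφ hφc hφ₀

lemma isDirichletWeakSolution_sub (h₁ : IsWeakSolutionE a f v₀ v₁)
    (h₂ : IsWeakSolutionE a f v₀ v₂) (hf : Continuous f) {p q : ℝ → ℝ → ℝ}
    (hp : IsBddMeasurable (Function.uncurry p)) (hq : IsBddMeasurable (Function.uncurry q))
    (hpv : ∀ s ∈ Icc 0 T, ∀ᵐ x ∂volume.restrict (Ici 0), p s x = v₁ x s)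
    (hqv : ∀ s ∈ Icc 0 T, ∀ᵐ x ∂volume.restrict (Ici 0), q s x = v₂ x s) :
    IsDirichletWeakSolution (Ici 0) a T (fun s x ↦ f (p s x) - f (q s x))
      fun s x ↦ p s x - q s x where
  flux_bddMeasurable := (hp.continuous_comp hf).sub (hq.continuous_comp hf)
  sol_bddMeasurable := hp.sub hq
  weak_eq t ht φ hφ hφc hφ₀ := by
    have hφ' : ContDiff ℝ (⊤ : ℕ∞) (deriv φ) := hφ.deriv'
    have hφ'' : ContDiff ℝ (⊤ : ℕ∞) (deriv (deriv φ)) := hφ'.deriv'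
    have hi : IntegrableOn φ (Ici 0) :=
      (hφ.continuous.integrable_of_hasCompactSupport hφc).integrableOn
    have hi' : IntegrableOn (deriv φ) (Ici 0) :=
      (hφ'.continuous.integrable_of_hasCompactSupport hφc.deriv).integrableOn
    have hi'' : IntegrableOn (deriv (deriv φ)) (Ici 0) :=
      (hφ''.continuous.integrable_of_hasCompactSupport hφc.deriv.deriv).integrableOn
    have hfp : IsBddMeasurable (Function.uncurry fun s x ↦ f (p s x)) := hp.continuous_comp hf
    have hfq : IsBddMeasurable (Function.uncurry fun s x ↦ f (q s x)) := hq.continuous_comp hf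
    have hφ_zero : φ 0 = 0 := hφ₀ 0 (by simp)
    have hweak₁ := h₁.weak_eq_of_ae_eq hpv ht hφ hφc hφ_zero
    have hweak₂ := h₂.weak_eq_of_ae_eq hqv ht hφ hφc hφ_zero
    have hFp := (hfp.integral_mul hi' hφ'.continuous.measurable).intervalIntegrable 0 t
    have hFq := (hfq.integral_mul hi' hφ'.continuous.measurable).intervalIntegrable 0 t
    have hDp := (hp.integral_mul hi'' hφ''.continuous.measurable).intervalIntegrable 0 t
    have hDq := (hq.integral_mul hi'' hφ''.continuous.measurable).intervalIntegrable 0 t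
    simp_rw [(hp.slice_left _).integral_sub_mul (hq.slice_left _) hi,
      (hfp.slice_left _).integral_sub_mul (hfq.slice_left _) hi',
      (hp.slice_left _).integral_sub_mul (hq.slice_left _) hi'', neg_add_eq_sub]
    rw [intervalIntegral.integral_sub ((hDp.sub hDq).const_mul a) (hFp.sub hFq),
      intervalIntegral.integral_const_mul,
      intervalIntegral.integral_sub hFp hFq, intervalIntegral.integral_sub hDp hDq]
    linarith

end IsWeakSolutionE

theorem uniqueness_of_weak_solutions_general {a : ℝ} (ha : 0 < a) {f : ℝ → ℝ}
    (hf : LocallyLipschitz f) {v₀ : ℝ → ℝ} {v₁ v₂ : ℝ → ℝ → ℝ}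
    (h₁ : IsWeakSolutionE a f v₀ v₁) (h₂ : IsWeakSolutionE a f v₀ v₂) {T : ℝ} (hT : 0 < T) :
    ∀ᵐ x ∂volume.restrict (Ici 0), v₁ x T = v₂ x T := by
  obtain ⟨c, hc₁, hc₂⟩ := ((h₁.eventually_ae_abs_le T).and (h₂.eventually_ae_abs_le T)).exists
  have heq₁ (s : ℝ) (hs : s ∈ Icc 0 T) :
      ∀ᵐ x ∂volume.restrict (Ici 0), truncate c (v₁ x s) = v₁ x s :=
    (hc₁ s hs).mono fun x ↦ truncate_of_abs_le
  have heq₂ (s : ℝ) (hs : s ∈ Icc 0 T) :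
      ∀ᵐ x ∂volume.restrict (Ici 0), truncate c (v₂ x s) = v₂ x s :=
    (hc₂ s hs).mono fun x ↦ truncate_of_abs_le
  have hdiff := h₁.isDirichletWeakSolution_sub h₂ hf.continuous
    (p := fun s x ↦ truncate c (v₁ x s)) (q := fun s x ↦ truncate c (v₂ x s))
    (isBddMeasurable_truncate c (h₁.1.comp measurable_swap))
    (isBddMeasurable_truncate c (h₂.1.comp measurable_swap)) heq₁ heq₂
  obtain ⟨L, hL⟩ := hf.locallyLipschitzOn.exists_lipschitzOnWith_of_compact
    (isCompact_Icc (a := (-c : ℝ)) (b := c))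
  have hzero := hdiff.ae_restrict_Ici_eq_zero_of_abs_flux_le ha
    (fun s x ↦ hL.dist_le_mul _ (truncate_mem_Icc c _) _ (truncate_mem_Icc c _)) ⟨hT, le_rfl⟩
  have hT_mem : T ∈ Icc 0 T := right_mem_Icc.2 hT.le
  filter_upwards [hzero, heq₁ T hT_mem, heq₂ T hT_mem] with x hx hx₁ hx₂
  rw [← hx₁, ← hx₂]
  exact sub_eq_zero.1 hx

/-- Uniqueness of weak solutions to (E): any two weak solutions agree a.e. on `[0,∞)`
at each positive time. -/
theorem uniqueness_of_weak_solutions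
    (a : ℝ) (ha : 0 < a) (f : ℝ → ℝ) (hf : ContDiff ℝ (⊤ : ℕ∞) f)
    (v₀ : ℝ → ℝ) (hv₀int : IntegrableOn v₀ (Ici (0:ℝ)))
    (hv₀bdd : ∃ C : ℝ, ∀ᵐ x ∂(volume.restrict (Ici (0:ℝ))), |v₀ x| ≤ C)
    (v₁ v₂ : ℝ → ℝ → ℝ)
    (h₁ : IsWeakSolutionE a f v₀ v₁) (h₂ : IsWeakSolutionE a f v₀ v₂) :
    ∀ t : ℝ, 0 < t →
      ∀ᵐ x ∂(volume.restrict (Ici (0:ℝ))), v₁ x t = v₂ x t := by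
  intro t ht
  have hf_lip : LocallyLipschitz f := (hf.of_le (by exact_mod_cast le_top)).locallyLipschitz
  exact uniqueness_of_weak_solutions_general ha hf_lip h₁ h₂ ht
end

section
/- The function u_stat is a positive C^∞ function on [0,∞) with ∫₀^∞ u_stat(x)dx = 1 and ∫₀^∞ x² u_stat(x)dx < ∞. Moreover v_stat(x) = ∫_x^∞ u_stat(y)dy for all x ≥ 0, u_stat satisfies the stationary equation −[(bℓ v_stat^{ℓ−1} − c₁)u_stat]'(x) + a u_stat''(x) = 0 for all x > 0, and the boundary condition (c₁ − bℓ)u_stat(0) + a u_stat'(0) = 0 holds. -/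
open MeasureTheory Set Filter

/-- The constant `c₁ = −λρ + b`. -/
noncomputable def cOne (lam b ρ : ℝ) : ℝ := -lam * ρ + b

/-- The constant `α = b / c₁`. -/
noncomputable def alphaStat (lam b ρ : ℝ) : ℝ := b / cOne lam b ρ

/-- `w(x) = (1−α) e^{(c₁/a)(ℓ−1)x} + α`. -/
noncomputable def wStat (ℓ : ℕ) (lam a b ρ x : ℝ) : ℝ :=
  (1 - alphaStat lam b ρ) * Real.exp (cOne lam b ρ / a * ((ℓ:ℝ) - 1) * x)
    + alphaStat lam b ρ

/-- The stationary tail profile `v_stat(x) = w(x)^{−1/(ℓ−1)}`. -/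
noncomputable def vStat (ℓ : ℕ) (lam a b ρ x : ℝ) : ℝ :=
  wStat ℓ lam a b ρ x ^ (-(1:ℝ) / ((ℓ:ℝ) - 1))

/-- The stationary density
`u_stat(x) = (c₁/a)(1−α) e^{(c₁/a)(ℓ−1)x} w(x)^{−ℓ/(ℓ−1)}`. -/
noncomputable def uStat (ℓ : ℕ) (lam a b ρ x : ℝ) : ℝ :=
  (cOne lam b ρ / a) * (1 - alphaStat lam b ρ)
    * Real.exp (cOne lam b ρ / a * ((ℓ:ℝ) - 1) * x)
    * wStat ℓ lam a b ρ x ^ (-(ℓ:ℝ) / ((ℓ:ℝ) - 1))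

/-!
The tail `v = v_stat` solves the Bernoulli equation `v' = -k v (1 - α v ^ (ℓ - 1))` with
`k = c₁ / a` and `v 0 = 1`, and `u = u_stat` is `-v'`. Differentiating the Bernoulli equation once
gives `a u' = (b ℓ v ^ (ℓ - 1) - c₁) u`: the flux vanishes identically, which contains both the
stationary equation and the boundary condition. Since `v` and `u` are `O(exp (-k x))`, the
integral of `u` over `[x, ∞)` is `v x` and all moments of `u` are finite.
-/

section ExponentialDecay

open Asymptotics

lemma integrableOn_Ici_pow_mul_of_isBigO_exp_neg {f : ℝ → ℝ} {c k : ℝ} (n : ℕ) (hk : 0 < k)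
    (hf : ContinuousOn f (Ici c)) (hO : f =O[atTop] fun x => Real.exp (-k * x)) :
    IntegrableOn (fun x => x ^ n * f x) (Ici c) := by
  have hpow : (fun x : ℝ => x ^ n) =O[atTop] fun x => Real.exp (k / 2 * x) :=
    (isLittleO_pow_exp_pos_mul_atTop n (half_pos hk)).isBigO
  have hdecay : (fun x => x ^ n * f x) =O[atTop] fun x => Real.exp (-(k / 2) * x) :=
    (hpow.mul hO).congr_right fun x => by rw [← Real.exp_add]; ring_nf
  rw [integrableOn_Ici_iff_integrableOn_Ioi]
  exact integrable_of_isBigO_exp_neg (half_pos hk) ((continuousOn_pow n).mul hf) hdecay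

end ExponentialDecay

section Bernoulli

open Asymptotics Topology

/-- The affine function of `exp (κ x)` equal to `1` at `0` whose powers express the solutions of
the Bernoulli equation; it is `w` of the paper, with `κ = (c₁ / a) (ℓ - 1)`. -/
noncomputable def bernoulliBase (α κ x : ℝ) : ℝ :=
  (1 - α) * Real.exp (κ * x) + α

/-- The solution `v` of the Bernoulli equation `v' = -k v (1 - α v ^ m)` with `v 0 = 1`, for a real
exponent `m ≠ 0`; it is meaningful only where `bernoulliBase α (k * m)` is positive. -/
noncomputable def bernoulliTail (k α m x : ℝ) : ℝ :=
  bernoulliBase α (k * m) x ^ (-1 / m)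

/-- The density `-v'` whose tail function is the Bernoulli solution `v = bernoulliTail k α m`, in
closed form. -/
noncomputable def bernoulliDensity (k α m x : ℝ) : ℝ :=
  k * (1 - α) * Real.exp (k * m * x) * bernoulliBase α (k * m) x ^ (-(m + 1) / m)

variable {k α m κ x : ℝ}

lemma one_le_bernoulliBase (hα : α ≤ 1) (hκ : 0 ≤ κ) (hx : 0 ≤ x) : 1 ≤ bernoulliBase α κ x := by
  have hexp : 1 ≤ Real.exp (κ * x) := Real.one_le_exp (mul_nonneg hκ hx)
  calc 1 = (1 - α) * 1 + α := by ring
    _ ≤ bernoulliBase α κ x := by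
      unfold bernoulliBase
      gcongr

lemma bernoulliBase_pos (hα : α ≤ 1) (hκ : 0 ≤ κ) (hx : 0 ≤ x) : 0 < bernoulliBase α κ x :=
  one_pos.trans_le (one_le_bernoulliBase hα hκ hx)

lemma contDiff_bernoulliBase {n : WithTop ℕ∞} : ContDiff ℝ n (bernoulliBase α κ) := by
  unfold bernoulliBase
  fun_prop

lemma hasDerivAt_bernoulliBase (α κ x : ℝ) :
    HasDerivAt (bernoulliBase α κ) (κ * ((1 - α) * Real.exp (κ * x))) x := by
  have hexp : HasDerivAt (fun y => Real.exp (κ * y)) (Real.exp (κ * x) * κ) x :=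
    (hasDerivAt_const_mul κ).exp
  exact ((hexp.const_mul (1 - α)).add_const α).congr_deriv (by ring)

lemma bernoulliBase_eq_exp_mul (α κ x : ℝ) :
    bernoulliBase α κ x = Real.exp (κ * x) * (1 - α + α * Real.exp (-κ * x)) := by
  have hexp : Real.exp (κ * x) * Real.exp (-κ * x) = 1 := by rw [← Real.exp_add]; simp
  unfold bernoulliBase
  linear_combination -α * hexp

lemma isBigO_bernoulliBase_rpow (hα : α < 1) (hκ : 0 < κ) (p : ℝ) :
    (fun x => bernoulliBase α κ x ^ p) =O[atTop] fun x => Real.exp (κ * p * x) := by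
  have hexp : Tendsto (fun x => Real.exp (-κ * x)) atTop (𝓝 0) :=
    Real.tendsto_exp_atBot.comp (tendsto_id.const_mul_atTop_of_neg (neg_neg_of_pos hκ))
  have hfactor : Tendsto (fun x => 1 - α + α * Real.exp (-κ * x)) atTop (𝓝 (1 - α)) := by
    simpa using (hexp.const_mul α).const_add (1 - α)
  have hα' : 0 < 1 - α := sub_pos.2 hα
  have hbounded : (fun x => (1 - α + α * Real.exp (-κ * x)) ^ p) =O[atTop] fun _ => (1 : ℝ) :=
    (hfactor.rpow_const (Or.inl hα'.ne')).isBigO_one ℝ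
  have hsplit : (fun x => bernoulliBase α κ x ^ p) =ᶠ[atTop]
      fun x => Real.exp (κ * p * x) * (1 - α + α * Real.exp (-κ * x)) ^ p := by
    filter_upwards [hfactor.eventually_const_lt hα'] with x hx
    rw [bernoulliBase_eq_exp_mul, Real.mul_rpow (Real.exp_pos _).le hx.le, ← Real.exp_mul,
      mul_right_comm]
  simpa using hsplit.trans_isBigO ((isBigO_refl _ _).mul hbounded)

@[simp]
lemma bernoulliTail_zero : bernoulliTail k α m 0 = 1 := by
  simp [bernoulliTail, bernoulliBase]

lemma bernoulliTail_rpow (hm : m ≠ 0) (hw : 0 ≤ bernoulliBase α (k * m) x) :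
    bernoulliTail k α m x ^ m = (bernoulliBase α (k * m) x)⁻¹ := by
  rw [bernoulliTail, ← Real.rpow_mul hw, div_mul_cancel₀ _ hm, Real.rpow_neg_one]

lemma isBigO_bernoulliTail (hk : 0 < k) (hα : α < 1) (hm : 0 < m) :
    bernoulliTail k α m =O[atTop] fun x => Real.exp (-k * x) :=
  (isBigO_bernoulliBase_rpow hα (mul_pos hk hm) (-1 / m)).congr_right fun x => by
    congr 1
    field_simp

lemma tendsto_bernoulliTail_atTop (hk : 0 < k) (hα : α < 1) (hm : 0 < m) :
    Tendsto (bernoulliTail k α m) atTop (𝓝 0) :=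
  (isBigO_bernoulliTail hk hα hm).trans_tendsto
    (Real.tendsto_exp_atBot.comp (tendsto_id.const_mul_atTop_of_neg (neg_neg_of_pos hk)))

lemma hasDerivAt_bernoulliTail (hm : m ≠ 0) (hw : 0 < bernoulliBase α (k * m) x) :
    HasDerivAt (bernoulliTail k α m) (-bernoulliDensity k α m x) x := by
  have hexponent : -1 / m - 1 = -(m + 1) / m := by field_simp; ring
  refine ((hasDerivAt_bernoulliBase α (k * m) x).rpow_const (Or.inl hw.ne')).congr_deriv ?_
  rw [hexponent, bernoulliDensity]
  field_simp

lemma bernoulliDensity_eq_mul_bernoulliTail (hm : m ≠ 0) (hw : 0 < bernoulliBase α (k * m) x) :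
    bernoulliDensity k α m x =
      k * bernoulliTail k α m x * (1 - α * bernoulliTail k α m x ^ m) := by
  have hexponent : -(m + 1) / m = -1 / m - 1 := by field_simp; ring
  have hexp : (1 - α) * Real.exp (k * m * x) = bernoulliBase α (k * m) x - α := by
    rw [bernoulliBase, add_sub_cancel_right]
  rw [bernoulliTail_rpow hm hw.le, bernoulliDensity, hexponent, Real.rpow_sub_one hw.ne',
    mul_assoc k, hexp, bernoulliTail]
  field_simp

lemma hasDerivAt_bernoulliDensity (hm : m ≠ 0) (hw : 0 < bernoulliBase α (k * m) x) :
    HasDerivAt (bernoulliDensity k α m)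
      (k * ((m + 1) * α * bernoulliTail k α m x ^ m - 1) * bernoulliDensity k α m x) x := by
  have hv : 0 < bernoulliTail k α m x := Real.rpow_pos_of_pos hw _
  have hv' := hasDerivAt_bernoulliTail hm hw
  have hbernoulli : bernoulliDensity k α m =ᶠ[𝓝 x]
      fun y => k * bernoulliTail k α m y * (1 - α * bernoulliTail k α m y ^ m) := by
    filter_upwards [(hasDerivAt_bernoulliBase α (k * m) x).continuousAt.eventually_const_lt hw]
      with y hy using bernoulliDensity_eq_mul_bernoulliTail hm hy
  have hpow : bernoulliTail k α m x * bernoulliTail k α m x ^ (m - 1) =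
      bernoulliTail k α m x ^ m := by
    rw [Real.rpow_sub_one hv.ne', mul_div_cancel₀ _ hv.ne']
  refine (((hv'.const_mul k).mul (((hv'.rpow_const (Or.inl hv.ne')).const_mul α).const_sub
    1)).congr_of_eventuallyEq hbernoulli).congr_deriv ?_
  linear_combination k * α * m * bernoulliDensity k α m x * hpow

lemma bernoulliDensity_pos (hk : 0 < k) (hα : α < 1) (hw : 0 < bernoulliBase α (k * m) x) :
    0 < bernoulliDensity k α m x := by
  unfold bernoulliDensity
  positivity

lemma contDiffOn_bernoulliDensity {n : WithTop ℕ∞} (hα : α ≤ 1) (hκ : 0 ≤ k * m) :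
    ContDiffOn ℝ n (bernoulliDensity k α m) (Ici 0) := by
  have hpow : ContDiffOn ℝ n (fun x => bernoulliBase α (k * m) x ^ (-(m + 1) / m)) (Ici 0) :=
    contDiff_bernoulliBase.contDiffOn.rpow_const_of_ne
      fun _ hx => (bernoulliBase_pos hα hκ hx).ne'
  exact ContDiffOn.mul (by fun_prop) hpow

lemma isBigO_bernoulliDensity (hk : 0 < k) (hα : α < 1) (hm : 0 < m) :
    bernoulliDensity k α m =O[atTop] fun x => Real.exp (-k * x) := by
  have hexp : (fun x => k * (1 - α) * Real.exp (k * m * x)) =O[atTop]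
      fun x => Real.exp (k * m * x) := isBigO_const_mul_self _ _ _
  refine (hexp.mul (isBigO_bernoulliBase_rpow hα (mul_pos hk hm) (-(m + 1) / m))).congr_right
    fun x => ?_
  rw [← Real.exp_add]
  congr 1
  field_simp
  ring

lemma setIntegral_Ici_bernoulliDensity (hk : 0 < k) (hα : α < 1) (hm : 0 < m) (hx : 0 ≤ x) :
    ∫ y in Ici x, bernoulliDensity k α m y = bernoulliTail k α m x := by
  have hw : ∀ y ∈ Ici x, 0 < bernoulliBase α (k * m) y := fun y hy =>
    bernoulliBase_pos hα.le (mul_pos hk hm).le (hx.trans hy)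
  have hneg : ∫ y in Ioi x, -bernoulliDensity k α m y = 0 - bernoulliTail k α m x :=
    integral_Ioi_of_hasDerivAt_of_nonpos' (fun y hy => hasDerivAt_bernoulliTail hm.ne' (hw y hy))
      (fun y hy => neg_nonpos.2 (bernoulliDensity_pos hk hα (hw y (Ioi_subset_Ici_self hy))).le)
      (tendsto_bernoulliTail_atTop hk hα hm)
  rw [integral_neg, zero_sub, neg_inj] at hneg
  rw [integral_Ici_eq_integral_Ioi, hneg]

end Bernoulli

section Stationary

variable {ℓ : ℕ} {lam a b ρ x : ℝ}

lemma uStat_eq_bernoulliDensity (ℓ : ℕ) (lam a b ρ : ℝ) :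
    uStat ℓ lam a b ρ = bernoulliDensity (cOne lam b ρ / a) (alphaStat lam b ρ) (ℓ - 1) := by
  funext x
  rw [bernoulliDensity, sub_add_cancel]
  rfl

lemma vStat_eq_bernoulliTail (ℓ : ℕ) (lam a b ρ : ℝ) :
    vStat ℓ lam a b ρ = bernoulliTail (cOne lam b ρ / a) (alphaStat lam b ρ) (ℓ - 1) :=
  rfl

lemma hasDerivAt_uStat (hℓ : 2 ≤ ℓ) (hc : cOne lam b ρ ≠ 0) (hw : 0 < wStat ℓ lam a b ρ x) :
    HasDerivAt (uStat ℓ lam a b ρ)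
      ((b * ℓ * vStat ℓ lam a b ρ x ^ (ℓ - 1) - cOne lam b ρ) * uStat ℓ lam a b ρ x / a) x := by
  have hm : (ℓ : ℝ) - 1 ≠ 0 := sub_ne_zero.2 (by exact_mod_cast (by lia : ℓ ≠ 1))
  have hpow : vStat ℓ lam a b ρ x ^ (ℓ - 1) = vStat ℓ lam a b ρ x ^ ((ℓ : ℝ) - 1) := by
    rw [← Real.rpow_natCast, Nat.cast_pred (by lia)]
  have hb : b = cOne lam b ρ * alphaStat lam b ρ := (mul_div_cancel₀ b hc).symm
  rw [hpow, vStat_eq_bernoulliTail, uStat_eq_bernoulliDensity]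
  refine (hasDerivAt_bernoulliDensity hm hw).congr_deriv ?_
  linear_combination -(ℓ * bernoulliTail (cOne lam b ρ / a) (alphaStat lam b ρ) (ℓ - 1) x
    ^ ((ℓ : ℝ) - 1) * bernoulliDensity (cOne lam b ρ / a) (alphaStat lam b ρ) (ℓ - 1) x / a) * hb

lemma cOne_pos (hlam : 0 < lam) (hb : 0 < b) (hρ : ρ < 0) : 0 < cOne lam b ρ :=
  add_pos (mul_pos_of_neg_of_neg (neg_neg_of_pos hlam) hρ) hb

lemma alphaStat_lt_one (hlam : 0 < lam) (hb : 0 < b) (hρ : ρ < 0) : alphaStat lam b ρ < 1 :=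
  (div_lt_one (cOne_pos hlam hb hρ)).2
    (lt_add_of_pos_left b (mul_pos_of_neg_of_neg (neg_neg_of_pos hlam) hρ))

end Stationary

theorem uStat_is_stationary_solution_general
    (ℓ : ℕ) (hℓ : 2 ≤ ℓ) (lam a b ρ : ℝ)
    (hk : 0 < cOne lam b ρ / a) (hα : alphaStat lam b ρ < 1) :
    (∀ x ≥ (0:ℝ), 0 < uStat ℓ lam a b ρ x) ∧
    ContDiffOn ℝ (⊤ : ℕ∞) (uStat ℓ lam a b ρ) (Ici (0:ℝ)) ∧
    (∫ x in Ici (0:ℝ), uStat ℓ lam a b ρ x) = 1 ∧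
    IntegrableOn (fun x => x ^ 2 * uStat ℓ lam a b ρ x) (Ici (0:ℝ)) ∧
    (∀ x ≥ (0:ℝ), vStat ℓ lam a b ρ x = ∫ y in Ici x, uStat ℓ lam a b ρ y) ∧
    (∀ x > (0:ℝ),
      -(deriv (fun y =>
          (b * (ℓ:ℝ) * vStat ℓ lam a b ρ y ^ (ℓ - 1) - cOne lam b ρ)
            * uStat ℓ lam a b ρ y) x)
        + a * deriv (deriv (uStat ℓ lam a b ρ)) x = 0) ∧
    (cOne lam b ρ - b * (ℓ:ℝ)) * uStat ℓ lam a b ρ 0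
      + a * deriv (uStat ℓ lam a b ρ) 0 = 0 := by
  have hm : (0:ℝ) < (ℓ:ℝ) - 1 := sub_pos.2 (by exact_mod_cast hℓ)
  obtain ⟨hc, ha⟩ : cOne lam b ρ ≠ 0 ∧ a ≠ 0 := div_ne_zero_iff.1 hk.ne'
  have hw : ∀ x ≥ (0:ℝ), 0 < wStat ℓ lam a b ρ x := fun x hx =>
    bernoulliBase_pos hα.le (mul_pos hk hm).le hx
  have hu' : ∀ x ≥ (0:ℝ), deriv (uStat ℓ lam a b ρ) x =
      (b * ℓ * vStat ℓ lam a b ρ x ^ (ℓ - 1) - cOne lam b ρ) * uStat ℓ lam a b ρ x / a :=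
    fun x hx => (hasDerivAt_uStat hℓ hc (hw x hx)).deriv
  have hu := uStat_eq_bernoulliDensity ℓ lam a b ρ
  have hv0 : vStat ℓ lam a b ρ 0 = 1 := bernoulliTail_zero
  have htail : ∀ x ≥ (0:ℝ), vStat ℓ lam a b ρ x = ∫ y in Ici x, uStat ℓ lam a b ρ y :=
    fun x hx => hu ▸ (setIntegral_Ici_bernoulliDensity hk hα hm hx).symm
  have hsmooth : ContDiffOn ℝ (⊤ : ℕ∞) (uStat ℓ lam a b ρ) (Ici 0) :=
    hu ▸ contDiffOn_bernoulliDensity hα.le (mul_pos hk hm).le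
  refine ⟨fun x hx => hu ▸ bernoulliDensity_pos hk hα (hw x hx), hsmooth,
    (htail 0 le_rfl).symm.trans hv0,
    integrableOn_Ici_pow_mul_of_isBigO_exp_neg 2 hk hsmooth.continuousOn
      (hu ▸ isBigO_bernoulliDensity hk hα hm), htail, fun x hx => ?_, ?_⟩
  · have hflux := eventuallyEq_of_mem (Ioi_mem_nhds hx) fun y hy => hu' y (mem_Ioi.1 hy).le
    rw [hflux.deriv_eq, deriv_div_const, mul_div_cancel₀ _ ha, neg_add_cancel]
  · rw [hu' 0 le_rfl, mul_div_cancel₀ _ ha, hv0]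
    ring

/-- `u_stat` is a positive smooth probability density on `[0,∞)` with finite second
moment, its tail function is `v_stat`, and it satisfies the stationary equation
`−[(bℓ v_stat^{ℓ−1} − c₁) u_stat]' + a u_stat'' = 0` together with the Robin boundary
condition `(c₁ − bℓ) u_stat(0) + a u_stat'(0) = 0`. -/
theorem uStat_is_stationary_solution
    (ℓ : ℕ) (hℓ : 2 ≤ ℓ) (lam a b ρ : ℝ)
    (hlam : 0 < lam) (ha : 0 < a) (hb : 0 < b) (hρ : ρ < 0) :
    (∀ x ≥ (0:ℝ), 0 < uStat ℓ lam a b ρ x) ∧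
    ContDiffOn ℝ (⊤ : ℕ∞) (uStat ℓ lam a b ρ) (Ici (0:ℝ)) ∧
    (∫ x in Ici (0:ℝ), uStat ℓ lam a b ρ x) = 1 ∧
    IntegrableOn (fun x => x ^ 2 * uStat ℓ lam a b ρ x) (Ici (0:ℝ)) ∧
    (∀ x ≥ (0:ℝ), vStat ℓ lam a b ρ x = ∫ y in Ici x, uStat ℓ lam a b ρ y) ∧
    (∀ x > (0:ℝ),
      -(deriv (fun y =>
          (b * (ℓ:ℝ) * vStat ℓ lam a b ρ y ^ (ℓ - 1) - cOne lam b ρ)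
            * uStat ℓ lam a b ρ y) x)
        + a * deriv (deriv (uStat ℓ lam a b ρ)) x = 0) ∧
    (cOne lam b ρ - b * (ℓ:ℝ)) * uStat ℓ lam a b ρ 0
      + a * deriv (uStat ℓ lam a b ρ) 0 = 0 := by
  exact uStat_is_stationary_solution_general ℓ hℓ lam a b ρ
    (div_pos (cOne_pos hlam hb hρ) ha) (alphaStat_lt_one hlam hb hρ)
end

section
/- Let a > 0 and let f : ℝ → ℝ be continuously differentiable with f(0) = 0. Let v ∈ C²([0,∞)) satisfy (f∘v)'(x) + a v''(x) = 0 for all x > 0 and lim_{x→∞} v(x) = 0. Then f(v(x)) + a v'(x) = 0 for all x ≥ 0; in particular v solves the first-order equation v' = −a^{−1} f(v) on [0,∞). -/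
open Set Filter

/-!
Let `v → l`, and let `A` be a continuous linear map in place of multiplication by `a`. The equation
says that `f ∘ v + A v'` has zero derivative, so it is a constant `c`. Since `f ∘ v → f l`, the
derivative `A v'` of `A ∘ v` tends to `c - f l`. But `A ∘ v` itself converges, so its increments
over unit intervals tend both to `c - f l` and to `0`, whence `c = f l`. Controlling the increments
by the mean value inequality, rather than the mean value theorem, allows vector-valued `v`.
-/

open scoped Topology

section NormedSpace

variable {E F : Type*} [NormedAddCommGroup E] [NormedSpace ℝ E]
  [NormedAddCommGroup F] [NormedSpace ℝ F]

theorem hasDerivAt_derivWithin_of_mem_nhds {u : ℝ → E} {s : Set ℝ} {x : ℝ}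
    (hu : DifferentiableOn ℝ u s) (hs : s ∈ 𝓝 x) : HasDerivAt u (derivWithin u s x) x :=
  (hu x (mem_of_mem_nhds hs)).hasDerivWithinAt.hasDerivAt hs

theorem exists_eqOn_const_Ici_of_hasDerivAt_zero {g : ℝ → E} {t₀ : ℝ}
    (hcont : ContinuousOn g (Ici t₀)) (hderiv : ∀ x > t₀, HasDerivAt g 0 x) :
    ∃ c, EqOn g (fun _ ↦ c) (Ici t₀) := by
  obtain ⟨c, hc⟩ : ∃ c, ∀ x ∈ Ioi t₀, g x = c :=
    isOpen_Ioi.exists_is_const_of_deriv_eq_zero isPreconnected_Ioi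
      (fun x hx ↦ (hderiv x hx).differentiableAt.differentiableWithinAt)
      (fun x hx ↦ (hderiv x hx).deriv)
  exact ⟨c, EqOn.of_subset_closure hc hcont continuousOn_const Ioi_subset_Ici_self
    (closure_Ioi t₀).ge⟩

theorem norm_image_sub_sub_smul_le_of_norm_deriv_sub_le {u u' : ℝ → E} {m : E} {s : Set ℝ}
    {C x y : ℝ} (hs : Convex ℝ s) (hu : ∀ z ∈ s, HasDerivWithinAt u (u' z) s z)
    (hbound : ∀ z ∈ s, ‖u' z - m‖ ≤ C) (hx : x ∈ s) (hy : y ∈ s) :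
    ‖u y - u x - (y - x) • m‖ ≤ C * ‖y - x‖ := by
  have hderiv : ∀ z ∈ s, HasDerivWithinAt (fun t ↦ u t - t • m) (u' z - m) s z := fun z hz ↦ by
    simpa only [id, one_smul] using (hu z hz).fun_sub ((hasDerivWithinAt_id z s).smul_const m)
  calc ‖u y - u x - (y - x) • m‖
      = ‖(u y - y • m) - (u x - x • m)‖ := by congr 1; module
    _ ≤ C * ‖y - x‖ := hs.norm_image_sub_le_of_norm_hasDerivWithin_le hderiv hbound hx hy

theorem tendsto_shift_sub_of_tendsto_deriv {u u' : ℝ → E} {m : E} (h : ℝ)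
    (hu : ∀ᶠ x in atTop, HasDerivAt u (u' x) x) (hu' : Tendsto u' atTop (𝓝 m)) :
    Tendsto (fun x ↦ u (x + h) - u x) atTop (𝓝 (h • m)) := by
  refine tendsto_sub_nhds_zero_iff.1 (NormedAddGroup.tendsto_nhds_zero.2 fun ε hε ↦ ?_)
  obtain ⟨δ, hδ, hδε⟩ : ∃ δ > 0, |h| * δ < ε := exists_pos_mul_lt hε |h|
  have hbound : ∀ᶠ x in atTop, ‖u' x - m‖ ≤ δ := by
    filter_upwards [hu'.eventually (Metric.closedBall_mem_nhds m hδ)] with x hx using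
      mem_closedBall_iff_norm.1 hx
  obtain ⟨N, hN⟩ := eventually_atTop.1 (hu.and hbound)
  filter_upwards [eventually_ge_atTop N, eventually_ge_atTop (N - h)] with x hx hxh
  calc ‖u (x + h) - u x - h • m‖
      = ‖u (x + h) - u x - (x + h - x) • m‖ := by rw [add_sub_cancel_left]
    _ ≤ δ * ‖x + h - x‖ :=
        norm_image_sub_sub_smul_le_of_norm_deriv_sub_le (convex_Ici N)
          (fun z hz ↦ (hN z hz).1.hasDerivWithinAt) (fun z hz ↦ (hN z hz).2) hx
          (sub_le_iff_le_add.1 hxh)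
    _ = |h| * δ := by rw [add_sub_cancel_left, Real.norm_eq_abs, mul_comm]
    _ < ε := hδε

theorem eq_zero_of_tendsto_of_tendsto_deriv {u u' : ℝ → E} {l m : E}
    (hu : ∀ᶠ x in atTop, HasDerivAt u (u' x) x) (hl : Tendsto u atTop (𝓝 l))
    (hu' : Tendsto u' atTop (𝓝 m)) : m = 0 := by
  have increment_tendsto : Tendsto (fun x ↦ u (x + 1) - u x) atTop (𝓝 m) := by
    simpa only [one_smul] using tendsto_shift_sub_of_tendsto_deriv 1 hu hu'
  have increment_tendsto_zero : Tendsto (fun x ↦ u (x + 1) - u x) atTop (𝓝 0) := by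
    simpa only [Function.comp_apply, id, sub_self] using
      (hl.comp (tendsto_atTop_add_const_right atTop 1 tendsto_id)).sub hl
  exact tendsto_nhds_unique increment_tendsto increment_tendsto_zero

theorem stationary_equation_first_integral_general {A : E →L[ℝ] F} {f : E → F} {v : ℝ → E}
    {t₀ : ℝ} {l : E} (hf : Differentiable ℝ f) (hv : DifferentiableOn ℝ v (Ici t₀))
    (hv' : DifferentiableOn ℝ (derivWithin v (Ici t₀)) (Ici t₀))
    (hode : ∀ x > t₀,
      derivWithin (f ∘ v) (Ici t₀) x + A (derivWithin (derivWithin v (Ici t₀)) (Ici t₀) x) = 0)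
    (hlim : Tendsto v atTop (𝓝 l)) :
    ∀ x ≥ t₀, f (v x) + A (derivWithin v (Ici t₀) x) = f l := by
  set v' := derivWithin v (Ici t₀)
  have hfv : DifferentiableOn ℝ (f ∘ v) (Ici t₀) := hf.comp_differentiableOn hv
  obtain ⟨c, hc⟩ : ∃ c, EqOn (fun x ↦ f (v x) + A (v' x)) (fun _ ↦ c) (Ici t₀) := by
    refine exists_eqOn_const_Ici_of_hasDerivAt_zero
      (hfv.continuousOn.add (A.continuous.comp_continuousOn hv'.continuousOn)) fun x hx ↦ ?_
    rw [← hode x hx]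
    exact (hasDerivAt_derivWithin_of_mem_nhds hfv (Ici_mem_nhds hx)).add
      (A.hasFDerivAt.comp_hasDerivAt x (hasDerivAt_derivWithin_of_mem_nhds hv' (Ici_mem_nhds hx)))
  have hAv_deriv : ∀ᶠ x in atTop, HasDerivAt (A ∘ v) (A (v' x)) x := by
    filter_upwards [eventually_gt_atTop t₀] with x hx using
      A.hasFDerivAt.comp_hasDerivAt x (hasDerivAt_derivWithin_of_mem_nhds hv (Ici_mem_nhds hx))
  have hAv_lim : Tendsto (A ∘ v) atTop (𝓝 (A l)) := (A.continuous.tendsto l).comp hlim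
  have hAv'_lim : Tendsto (fun x ↦ A (v' x)) atTop (𝓝 (c - f l)) := by
    refine (((hf.continuous.tendsto l).comp hlim).const_sub c).congr' ?_
    filter_upwards [eventually_ge_atTop t₀] with x hx using sub_eq_of_eq_add' (hc hx).symm
  have hcl : c = f l :=
    sub_eq_zero.1 (eq_zero_of_tendsto_of_tendsto_deriv hAv_deriv hAv_lim hAv'_lim)
  exact fun x hx ↦ (hc hx).trans hcl

end NormedSpace

/-- Integration of the stationary equation: if `v ∈ C²([0,∞))` satisfies
`(f∘v)' + a v'' = 0` on `(0,∞)` and `v(x) → 0` as `x → ∞`, where `f` is `C¹` with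
`f(0) = 0` and `a > 0`, then `f(v(x)) + a v'(x) = 0` for all `x ≥ 0`. -/
theorem stationary_equation_first_integral
    (a : ℝ) (ha : 0 < a) (f : ℝ → ℝ) (hf : ContDiff ℝ 1 f) (hf0 : f 0 = 0)
    (v : ℝ → ℝ) (hv : ContDiffOn ℝ 2 v (Ici (0:ℝ)))
    (hode : ∀ x > (0:ℝ),
      derivWithin (f ∘ v) (Ici (0:ℝ)) x
        + a * derivWithin (derivWithin v (Ici (0:ℝ))) (Ici (0:ℝ)) x = 0)
    (hlim : Tendsto v atTop (nhds 0)) :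
    ∀ x ≥ (0:ℝ), f (v x) + a * derivWithin v (Ici (0:ℝ)) x = 0 := by
  simpa only [ContinuousLinearMap.mul_apply', hf0] using
    stationary_equation_first_integral_general (A := ContinuousLinearMap.mul ℝ ℝ a)
      (hf.differentiable one_ne_zero) (hv.differentiableOn two_ne_zero)
      ((hv.derivWithin (uniqueDiffOn_Ici 0) one_add_one_eq_two.le).differentiableOn one_ne_zero)
      hode hlim
end

section
/- As b → 0+, the probability measures μ_b(dx) = u_b(x)dx on [0,∞) converge weakly to the exponential distribution with density (λ|ρ|/a)e^{−(λ|ρ|/a)x}dx. -/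
open MeasureTheory Set Filter

/-!
Write `k = -λρ`, `z = (1 - α) e^{(c₁/a)(ℓ-1)x}` and `r = -1/(ℓ-1)`, so that
`u_b(x) = (c₁/a) z (z + α)^{r-1}`. At `b = 0` we have `α = 0`, and `u_0(x) = (c₁/a) z^r` is exactly
the exponential density of rate `k/a`; continuity in `b` gives pointwise convergence. For `b > 0`
dropping `α` from the power gives `u_b(x) ≤ (c₁/a) (1 - α)^r e^{-(c₁/a)x}`, and as
`1 - α = k/c₁` and `-1 ≤ r`, for `b ≤ k` this is at most `(4k/a) e^{-(k/a)x}`. Dominated convergence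
concludes, for every test function integrable against the limit law.
-/

open Real Topology

section RealPowers

variable {z α r β p : ℝ}

lemma mul_rpow_sub_one_self (hz : z ≠ 0) (r : ℝ) : z * z ^ (r - 1) = z ^ r := by
  rw [rpow_sub_one hz, mul_div_cancel₀ _ hz]

lemma mul_add_rpow_sub_one_le_rpow (hz : 0 < z) (hα : 0 ≤ α) (hr : r ≤ 1) :
    z * (z + α) ^ (r - 1) ≤ z ^ r :=
  calc z * (z + α) ^ (r - 1) ≤ z * z ^ (r - 1) :=
        mul_le_mul_of_nonneg_left
          (rpow_le_rpow_of_nonpos hz (le_add_of_nonneg_right hα) (sub_nonpos.2 hr)) hz.le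
    _ = z ^ r := mul_rpow_sub_one_self hz.ne' r

lemma mul_exp_rpow_neg_one_div (hβ : 0 ≤ β) (hp : p ≠ 0) (s x : ℝ) :
    (β * exp (s * p * x)) ^ (-1 / p) = β ^ (-1 / p) * exp (-s * x) := by
  rw [mul_rpow hβ (exp_pos _).le, ← exp_mul]
  congr 2
  field_simp

end RealPowers

section StationaryDensity

variable {ℓ : ℕ} {lam a b ρ x : ℝ}

lemma cast_sub_one_ne_zero (hℓ : ℓ ≠ 1) : (ℓ : ℝ) - 1 ≠ 0 :=
  sub_ne_zero.2 (Nat.cast_ne_one.2 hℓ)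

lemma one_sub_alphaStat (hc : cOne lam b ρ ≠ 0) :
    1 - alphaStat lam b ρ = -lam * ρ / cOne lam b ρ := by
  rw [alphaStat, one_sub_div hc, cOne, add_sub_cancel_right]

lemma uStat_eq_mul_rpow_sub_one (hℓ : ℓ ≠ 1) :
    uStat ℓ lam a b ρ x = cOne lam b ρ / a *
      ((1 - alphaStat lam b ρ) * exp (cOne lam b ρ / a * ((ℓ : ℝ) - 1) * x) *
        wStat ℓ lam a b ρ x ^ (-1 / ((ℓ : ℝ) - 1) - 1)) := by
  have hexponent : -(ℓ : ℝ) / ((ℓ : ℝ) - 1) = -1 / ((ℓ : ℝ) - 1) - 1 := by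
    have := cast_sub_one_ne_zero hℓ
    field_simp
    ring
  rw [uStat, hexponent]
  ring

lemma uStat_zero (hℓ : ℓ ≠ 1) :
    uStat ℓ lam a 0 ρ x = -lam * ρ / a * exp (-(-lam * ρ / a) * x) := by
  rw [uStat_eq_mul_rpow_sub_one hℓ]
  simp only [wStat, alphaStat, cOne, zero_div, sub_zero, add_zero]
  rw [mul_rpow_sub_one_self (by positivity),
    mul_exp_rpow_neg_one_div zero_le_one (cast_sub_one_ne_zero hℓ), one_rpow, one_mul]

lemma wStat_pos (hα₀ : 0 ≤ alphaStat lam b ρ) (hα₁ : alphaStat lam b ρ < 1) :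
    0 < wStat ℓ lam a b ρ x :=
  add_pos_of_pos_of_nonneg (mul_pos (sub_pos.2 hα₁) (exp_pos _)) hα₀

lemma uStat_nonneg (ha : 0 ≤ a) (hc : 0 ≤ cOne lam b ρ) (hα₀ : 0 ≤ alphaStat lam b ρ)
    (hα₁ : alphaStat lam b ρ < 1) : 0 ≤ uStat ℓ lam a b ρ x :=
  mul_nonneg (mul_nonneg (mul_nonneg (div_nonneg hc ha) (sub_nonneg.2 hα₁.le)) (exp_pos _).le)
    (rpow_nonneg (wStat_pos hα₀ hα₁).le _)

lemma uStat_le_rpow_mul_exp (hℓ : 2 ≤ ℓ) (ha : 0 ≤ a) (hc : 0 ≤ cOne lam b ρ)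
    (hα₀ : 0 ≤ alphaStat lam b ρ) (hα₁ : alphaStat lam b ρ < 1) :
    uStat ℓ lam a b ρ x ≤ cOne lam b ρ / a *
      ((1 - alphaStat lam b ρ) ^ (-1 / ((ℓ : ℝ) - 1)) * exp (-(cOne lam b ρ / a) * x)) := by
  have hα : 0 < 1 - alphaStat lam b ρ := sub_pos.2 hα₁
  have hℓ' : (2 : ℝ) ≤ ℓ := mod_cast hℓ
  have hexponent : -1 / ((ℓ : ℝ) - 1) ≤ 1 :=
    (div_nonpos_of_nonpos_of_nonneg (by norm_num) (by linarith)).trans zero_le_one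
  rw [uStat_eq_mul_rpow_sub_one (by lia),
    ← mul_exp_rpow_neg_one_div hα.le (cast_sub_one_ne_zero (by lia))]
  exact mul_le_mul_of_nonneg_left
    (mul_add_rpow_sub_one_le_rpow (by positivity) hα₀ hexponent) (by positivity)

lemma one_sub_alphaStat_rpow_le_two (hℓ : 2 ≤ ℓ) (hb : b ∈ Ioc 0 (-lam * ρ)) :
    (1 - alphaStat lam b ρ) ^ (-1 / ((ℓ : ℝ) - 1)) ≤ 2 := by
  have hk : 0 < -lam * ρ := hb.1.trans_le hb.2
  have hc : 0 < cOne lam b ρ := add_pos hk hb.1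
  have hc_le : cOne lam b ρ ≤ 2 * (-lam * ρ) := by unfold cOne; linarith [hb.2]
  have hℓ' : (2 : ℝ) ≤ ℓ := mod_cast hℓ
  have hexponent : -1 ≤ -1 / ((ℓ : ℝ) - 1) := by
    rw [le_div_iff₀ (by linarith)]
    linarith
  have hratio : -lam * ρ / cOne lam b ρ ≤ 1 := by
    rw [div_le_one hc]
    exact le_add_of_nonneg_right hb.1.le
  rw [one_sub_alphaStat hc.ne']
  calc (-lam * ρ / cOne lam b ρ) ^ (-1 / ((ℓ : ℝ) - 1))
      ≤ (-lam * ρ / cOne lam b ρ) ^ (-1 : ℝ) :=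
        rpow_le_rpow_of_exponent_ge (by positivity) hratio hexponent
    _ = cOne lam b ρ / (-lam * ρ) := by rw [rpow_neg_one, inv_div]
    _ ≤ 2 := by rwa [div_le_iff₀ hk]

lemma abs_uStat_le_const_mul_exp (hℓ : 2 ≤ ℓ) (ha : 0 ≤ a) (hb : b ∈ Ioc 0 (-lam * ρ))
    (hx : 0 ≤ x) :
    |uStat ℓ lam a b ρ x| ≤ 4 * (-lam * ρ / a) * exp (-(-lam * ρ / a) * x) := by
  have hb₀ : 0 < b := hb.1
  have hk : 0 < -lam * ρ := hb₀.trans_le hb.2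
  have hc : 0 < cOne lam b ρ := add_pos hk hb₀
  have hk_le : -lam * ρ ≤ cOne lam b ρ := le_add_of_nonneg_right hb₀.le
  have hc_le : cOne lam b ρ ≤ 2 * (-lam * ρ) := by unfold cOne; linarith [hb.2]
  have hα₀ : 0 ≤ alphaStat lam b ρ := div_nonneg hb₀.le hc.le
  have hα₁ : alphaStat lam b ρ < 1 := by
    rw [alphaStat, div_lt_one hc]
    exact lt_add_of_pos_left b hk
  rw [abs_of_nonneg (uStat_nonneg ha hc.le hα₀ hα₁)]
  calc uStat ℓ lam a b ρ x
      ≤ cOne lam b ρ / a *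
          ((1 - alphaStat lam b ρ) ^ (-1 / ((ℓ : ℝ) - 1)) * exp (-(cOne lam b ρ / a) * x)) :=
        uStat_le_rpow_mul_exp hℓ ha hc.le hα₀ hα₁
    _ ≤ 2 * (-lam * ρ) / a * (2 * exp (-(-lam * ρ / a) * x)) := by
        gcongr
        exact one_sub_alphaStat_rpow_le_two hℓ hb
    _ = 4 * (-lam * ρ / a) * exp (-(-lam * ρ / a) * x) := by ring

lemma measurable_uStat (ℓ : ℕ) (lam a b ρ : ℝ) : Measurable (uStat ℓ lam a b ρ) := by
  unfold uStat wStat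
  fun_prop

lemma continuousAt_uStat (hc : cOne lam b ρ ≠ 0) (hw : wStat ℓ lam a b ρ x ≠ 0) :
    ContinuousAt (fun b ↦ uStat ℓ lam a b ρ x) b := by
  have hcOne : ContinuousAt (fun b ↦ cOne lam b ρ) b := by
    unfold cOne
    fun_prop
  have halpha : ContinuousAt (fun b ↦ alphaStat lam b ρ) b := continuousAt_id.div hcOne hc
  have hone_sub : ContinuousAt (fun b ↦ 1 - alphaStat lam b ρ) b := continuousAt_const.sub halpha
  have hexp : ContinuousAt (fun b ↦ exp (cOne lam b ρ / a * ((ℓ : ℝ) - 1) * x)) b := by fun_prop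
  have hwStat : ContinuousAt (fun b ↦ wStat ℓ lam a b ρ x) b := (hone_sub.mul hexp).add halpha
  exact (((hcOne.div_const a).mul hone_sub).mul hexp).mul (hwStat.rpow_const (Or.inl hw))

lemma tendsto_uStat_zero (hℓ : ℓ ≠ 1) (hk : -lam * ρ ≠ 0) :
    Tendsto (fun b ↦ uStat ℓ lam a b ρ x) (𝓝 0)
      (𝓝 (-lam * ρ / a * exp (-(-lam * ρ / a) * x))) := by
  have hα : alphaStat lam 0 ρ = 0 := zero_div _
  rw [← uStat_zero hℓ]
  exact continuousAt_uStat (by simpa only [cOne, add_zero] using hk)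
    (wStat_pos hα.ge (hα.trans_lt one_pos)).ne'

end StationaryDensity

lemma integrableOn_exp_neg_mul_smul_Ici {E : Type*} [NormedAddCommGroup E] [NormedSpace ℝ E]
    {s c C : ℝ} {g : ℝ → E} (hs : 0 < s) (hg : AEStronglyMeasurable g (volume.restrict (Ici c)))
    (hC : ∀ᵐ x ∂volume.restrict (Ici c), ‖g x‖ ≤ C) :
    IntegrableOn (fun x ↦ exp (-s * x) • g x) (Ici c) := by
  have hexp : IntegrableOn (fun x ↦ exp (-s * x)) (Ici c) := by
    rw [integrableOn_Ici_iff_integrableOn_Ioi]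
    exact exp_neg_integrableOn_Ioi c hs
  exact hexp.smul_bdd C hg hC

theorem uStat_weak_convergence_to_exponential_as_b_to_zero_general
    {E : Type*} [NormedAddCommGroup E] [NormedSpace ℝ E] {ℓ : ℕ} (hℓ : 2 ≤ ℓ) {lam a ρ : ℝ}
    (ha : 0 < a) (hk : 0 < -lam * ρ) {g : ℝ → E}
    (hg : IntegrableOn (fun x ↦ exp (-(-lam * ρ / a) * x) • g x) (Ici 0)) :
    Tendsto (fun b ↦ ∫ x in Ici (0 : ℝ), uStat ℓ lam a b ρ x • g x) (𝓝[>] 0)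
      (𝓝 (∫ x in Ici (0 : ℝ), (-lam * ρ / a * exp (-(-lam * ρ / a) * x)) • g x)) := by
  have hg_meas : AEStronglyMeasurable g (volume.restrict (Ici 0)) := by
    have hexp : Continuous fun x ↦ exp (-lam * ρ / a * x) := by fun_prop
    refine (hexp.aestronglyMeasurable.smul hg.aestronglyMeasurable).congr (.of_forall fun x ↦ ?_)
    simp [smul_smul, ← exp_add]
  refine tendsto_integral_filter_of_dominated_convergence
    (fun x ↦ 4 * (-lam * ρ / a) * ‖exp (-(-lam * ρ / a) * x) • g x‖)
    (.of_forall fun b ↦ (measurable_uStat ℓ lam a b ρ).aestronglyMeasurable.smul hg_meas)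
    ?_ (hg.norm.const_mul _) (.of_forall fun x ↦ ?_)
  · filter_upwards [Ioc_mem_nhdsGT hk] with b hb
    filter_upwards [ae_restrict_mem measurableSet_Ici] with x hx
    rw [norm_smul, norm_smul, norm_of_nonneg (exp_pos _).le, ← mul_assoc]
    gcongr
    exact abs_uStat_le_const_mul_exp hℓ ha.le hb hx
  · exact ((tendsto_uStat_zero (by lia) hk.ne').mono_left nhdsWithin_le_nhds).smul_const (g x)

/-- As `b → 0⁺`, the probability measures `u_b(x)dx` on `[0,∞)` converge weakly to the
exponential distribution with density `(λ|ρ|/a) e^{−(λ|ρ|/a)x}`: for every bounded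
continuous test function `g`, the integrals converge. -/
theorem uStat_weak_convergence_to_exponential_as_b_to_zero
    (ℓ : ℕ) (hℓ : 2 ≤ ℓ) (lam a ρ : ℝ)
    (hlam : 0 < lam) (ha : 0 < a) (hρ : ρ < 0) :
    ∀ g : ℝ → ℝ, Continuous g → (∃ C : ℝ, ∀ x, |g x| ≤ C) →
      Tendsto (fun b => ∫ x in Ici (0:ℝ), g x * uStat ℓ lam a b ρ x)
        (nhdsWithin 0 (Ioi 0))
        (nhds (∫ x in Ici (0:ℝ),
          g x * (lam * |ρ| / a * Real.exp (-(lam * |ρ| / a) * x)))) := by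
  rintro g hg ⟨C, hC⟩
  have hk : 0 < -lam * ρ := mul_pos_of_neg_of_neg (neg_neg_of_pos hlam) hρ
  have hrate : lam * |ρ| = -lam * ρ := by rw [abs_of_neg hρ, mul_neg, neg_mul]
  simpa only [hrate, smul_eq_mul, mul_comm (g _)] using
    uStat_weak_convergence_to_exponential_as_b_to_zero_general hℓ ha hk
      (integrableOn_exp_neg_mul_smul_Ici (div_pos hk ha) hg.aestronglyMeasurable (.of_forall hC))
end

section
/- Fix an integer ℓ ≥ 2 and for n ≥ ℓ and r ∈ {1,…,n} let p_{n,r} = C(n−r, ℓ−1)/C(n, ℓ). Then lim_{n→∞} max_{1 ≤ r ≤ n} | (n/ℓ)·p_{n,r} − (1 − r/n)^{ℓ−1} | = 0; equivalently, writing p_{n,r} = (ℓ/n)[(1 − r/n)^{ℓ−1} + α_{n,r}], one has max_{r ∈ {1,…,n}} |α_{n,r}| → 0 as n → ∞. -/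
/-- The routing probability of the power-of-`ℓ`-choices algorithm (sampling without
replacement): `p_{n,r} = C(n−r, ℓ−1) / C(n, ℓ)`. -/
noncomputable def pnr (n ℓ r : ℕ) : ℝ :=
  (Nat.choose (n - r) (ℓ - 1) : ℝ) / (Nat.choose n ℓ : ℝ)

/-!
Absorbing `n / ℓ` into the binomial coefficient, `(n / ℓ) p_{n,r}` equals
`C(n - r, ℓ - 1) / C(n - 1, ℓ - 1)`, which is the product of the `ℓ - 1` ratios
`(n - r - j) / (n - 1 - j)`. Each ratio lies in `[0, 1]` and differs from `(n - r) / n` by at most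
`(j + 1) / n`. Since the difference of two products of factors in `[0, 1]` is at most the sum of
the differences of the factors, the error is at most `(ℓ - 1)² / n`, uniformly in `r`.
-/

open Finset

theorem norm_prod_sub_prod_le_sum_norm_sub {ι R : Type*} [NormedCommRing R] [NormOneClass R]
    (s : Finset ι) {f g : ι → R} (hf : ∀ i ∈ s, ‖f i‖ ≤ 1) (hg : ∀ i ∈ s, ‖g i‖ ≤ 1) :
    ‖∏ i ∈ s, f i - ∏ i ∈ s, g i‖ ≤ ∑ i ∈ s, ‖f i - g i‖ := by
  classical
  induction s using Finset.induction_on with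
  | empty => simp
  | insert a s ha ih =>
    rw [forall_mem_insert] at hf hg
    have norm_prod_f_le : ‖∏ i ∈ s, f i‖ ≤ 1 :=
      (Finset.norm_prod_le s f).trans (prod_le_one (fun i _ => norm_nonneg (f i)) hf.2)
    rw [prod_insert ha, prod_insert ha, sum_insert ha]
    calc ‖f a * ∏ i ∈ s, f i - g a * ∏ i ∈ s, g i‖
        = ‖(f a - g a) * ∏ i ∈ s, f i + g a * (∏ i ∈ s, f i - ∏ i ∈ s, g i)‖ := by
          congr 1; ring
      _ ≤ ‖f a - g a‖ * ‖∏ i ∈ s, f i‖ + ‖g a‖ * ‖∏ i ∈ s, f i - ∏ i ∈ s, g i‖ :=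
          norm_add_le_of_le (norm_mul_le _ _) (norm_mul_le _ _)
      _ ≤ ‖f a - g a‖ + ∑ i ∈ s, ‖f i - g i‖ :=
          add_le_add (mul_le_of_le_one_right (norm_nonneg _) norm_prod_f_le)
            ((mul_le_of_le_one_left (norm_nonneg _) hg.1).trans (ih hf.2 hg.2))

theorem choose_div_choose_eq_prod_range {K : Type*} [Field K] [CharZero K] (m n k : ℕ) :
    (m.choose k : K) / n.choose k = ∏ j ∈ range k, ((m - j : ℕ) : K) / (n - j : ℕ) := by
  have factorial_ne_zero : (k.factorial : K) ≠ 0 := Nat.cast_ne_zero.2 k.factorial_ne_zero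
  rw [prod_div_distrib, ← Nat.cast_prod, ← Nat.cast_prod, ← Nat.descFactorial_eq_prod_range,
    ← Nat.descFactorial_eq_prod_range, Nat.descFactorial_eq_factorial_mul_choose,
    Nat.descFactorial_eq_factorial_mul_choose, Nat.cast_mul, Nat.cast_mul,
    mul_div_mul_left _ _ factorial_ne_zero]

section Ratios

variable {K : Type*} [Field K] [LinearOrder K] [IsStrictOrderedRing K] {m n : ℕ}

theorem natCast_div_le_one_of_le (hmn : m ≤ n) : (m : K) / n ≤ 1 :=
  div_le_one_of_le₀ (Nat.cast_le.2 hmn) n.cast_nonneg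

theorem abs_sub_div_sub_sub_div_succ_le (hmn : m ≤ n) (j : ℕ) :
    |((m - j : ℕ) : K) / (n - j : ℕ) - m / (n + 1 : ℕ)| ≤ (j + 1) / (n + 1 : ℕ) := by
  have n_succ_pos : (0 : K) < (n + 1 : ℕ) := Nat.cast_pos.2 n.succ_pos
  obtain hmj | hjm := le_or_gt m j
  · have hmj' : (m : K) ≤ j + 1 := by exact_mod_cast hmj.trans j.le_succ
    rw [Nat.sub_eq_zero_of_le hmj, Nat.cast_zero, zero_div, zero_sub, abs_neg,
      abs_of_nonneg (by positivity)]
    gcongr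
  · set t : K := ((m - j : ℕ) : K) / (n - j : ℕ) with ht
    have t_nonneg : 0 ≤ t := by positivity
    have t_le_one : t ≤ 1 := natCast_div_le_one_of_le (Nat.sub_le_sub_right hmn j)
    have t_mul : t * (n - j) = m - j := by
      have n_sub_j_ne_zero : ((n - j : ℕ) : K) ≠ 0 := Nat.cast_ne_zero.2 (by omega)
      rw [← Nat.cast_sub hjm.le, ← Nat.cast_sub (hjm.le.trans hmn), ht,
        div_mul_cancel₀ _ n_sub_j_ne_zero]
    -- As `t` runs from `0` to `1`, the numerator on the right runs from `-j` to `1`.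
    have sub_eq : t - m / (n + 1 : ℕ) = (t * (j + 1) - j) / (n + 1 : ℕ) := by
      rw [eq_div_iff n_succ_pos.ne', sub_mul, div_mul_cancel₀ _ n_succ_pos.ne', Nat.cast_succ]
      linear_combination t_mul
    rw [sub_eq, abs_div, abs_of_pos n_succ_pos]
    gcongr
    have t_mul_nonneg : 0 ≤ t * (j + 1) := mul_nonneg t_nonneg (by positivity)
    have t_mul_le : t * (j + 1) ≤ j + 1 := mul_le_of_le_one_left (by positivity) t_le_one
    rw [abs_le]
    constructor <;> linarith [j.cast_nonneg (α := K)]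

end Ratios

theorem abs_choose_div_choose_sub_pow_le {m n : ℕ} (hmn : m ≤ n) (k : ℕ) :
    |(m.choose k : ℝ) / n.choose k - ((m : ℝ) / (n + 1 : ℕ)) ^ k| ≤ (k : ℝ) ^ 2 / (n + 1 : ℕ) := by
  have norm_div_le_one {a b : ℕ} (hab : a ≤ b) : ‖(a : ℝ) / b‖ ≤ 1 :=
    (Real.norm_of_nonneg (by positivity)).trans_le (natCast_div_le_one_of_le hab)
  calc |(m.choose k : ℝ) / n.choose k - ((m : ℝ) / (n + 1 : ℕ)) ^ k|
      = ‖∏ j ∈ range k, ((m - j : ℕ) : ℝ) / (n - j : ℕ) -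
          ∏ _j ∈ range k, (m : ℝ) / (n + 1 : ℕ)‖ := by
        rw [choose_div_choose_eq_prod_range, prod_const, card_range, Real.norm_eq_abs]
    _ ≤ ∑ j ∈ range k, ‖((m - j : ℕ) : ℝ) / (n - j : ℕ) - (m : ℝ) / (n + 1 : ℕ)‖ :=
        norm_prod_sub_prod_le_sum_norm_sub _
          (fun j _ => norm_div_le_one (Nat.sub_le_sub_right hmn j))
          (fun _ _ => norm_div_le_one (hmn.trans n.le_succ))
    _ ≤ ∑ _j ∈ range k, (k : ℝ) / (n + 1 : ℕ) := by
        refine sum_le_sum fun j hj => (abs_sub_div_sub_sub_div_succ_le hmn j).trans ?_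
        gcongr
        exact_mod_cast mem_range.1 hj
    _ = (k : ℝ) ^ 2 / (n + 1 : ℕ) := by
        rw [sum_const, card_range, nsmul_eq_mul, sq, mul_div_assoc]

theorem div_mul_pnr_succ_succ (n k r : ℕ) :
    ((n + 1 : ℕ) : ℝ) / (k + 1 : ℕ) * pnr (n + 1) (k + 1) r =
      ((n + 1 - r).choose k : ℝ) / n.choose k := by
  have absorption : ((n + 1).choose (k + 1) : ℝ) * (k + 1 : ℕ) = (n + 1 : ℕ) * n.choose k := by
    exact_mod_cast (Nat.add_one_mul_choose_eq n k).symm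
  rw [pnr, Nat.add_sub_cancel, div_mul_div_comm, mul_comm ((k + 1 : ℕ) : ℝ), absorption,
    mul_div_mul_left _ _ (Nat.cast_ne_zero.2 n.succ_ne_zero)]

theorem abs_div_mul_pnr_sub_pow_le {n ℓ r : ℕ} (hℓ : 1 ≤ ℓ) (hr : 1 ≤ r) (hrn : r ≤ n) :
    |(n : ℝ) / ℓ * pnr n ℓ r - (1 - (r : ℝ) / n) ^ (ℓ - 1)| ≤ ((ℓ - 1 : ℕ) : ℝ) ^ 2 / n := by
  obtain ⟨k, rfl⟩ := Nat.exists_eq_add_of_le' hℓ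
  obtain ⟨n, rfl⟩ := Nat.exists_eq_add_of_le' (hr.trans hrn)
  have one_sub_div : 1 - (r : ℝ) / (n + 1 : ℕ) = ((n + 1 - r : ℕ) : ℝ) / (n + 1 : ℕ) := by
    rw [Nat.cast_sub hrn, sub_div, div_self (Nat.cast_ne_zero.2 n.succ_ne_zero)]
  rw [div_mul_pnr_succ_succ, one_sub_div, Nat.add_sub_cancel]
  exact abs_choose_div_choose_sub_pow_le (by omega) k

/-- Uniform asymptotics of `p_{n,r}`:
`max_{1 ≤ r ≤ n} |(n/ℓ) p_{n,r} − (1 − r/n)^{ℓ−1}| → 0` as `n → ∞`. -/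
theorem pnr_uniform_asymptotics (ℓ : ℕ) (hℓ : 2 ≤ ℓ) :
    ∀ ε > (0:ℝ), ∃ N : ℕ, ∀ n : ℕ, N ≤ n → ℓ ≤ n →
      ∀ r : ℕ, 1 ≤ r → r ≤ n →
        |((n : ℝ) / (ℓ : ℝ)) * pnr n ℓ r - (1 - (r : ℝ) / (n : ℝ)) ^ (ℓ - 1)| < ε := by
  intro ε hε
  have error_tendsto_zero := tendsto_const_div_atTop_nhds_zero_nat (((ℓ - 1 : ℕ) : ℝ) ^ 2)
  obtain ⟨N, hN⟩ := Filter.eventually_atTop.1 (error_tendsto_zero.eventually_lt_const hε)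
  exact ⟨N, fun n hNn _ r hr hrn =>
    (abs_div_mul_pnr_sub_pow_le (one_le_two.trans hℓ) hr hrn).trans_lt (hN n hNn)⟩
end

section
/- Let n ≥ 1 be an integer, ε > 0, and let x, y ∈ ℝ^n. Let μ_x = n^{−1} Σ_{i=1}^n δ_{x_i} and μ_y = n^{−1} Σ_{i=1}^n δ_{y_i} be the corresponding empirical probability measures on ℝ. If the Lévy–Prokhorov distance between μ_x and μ_y is greater than ε, then #{i ∈ {1,…,n} : |x_i − y_i| ≥ ε} > nε. -/
open MeasureTheory

/-!
The two empirical measures are the images under `x` and `y` of the normalized counting measure on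
the index set, so the index set couples them. For any coupling by maps `f` and `g`, a point with
`f ω ∈ B` either has `g ω` in the open `ε`-thickening of `B` or satisfies `ε ≤ edist (f ω) (g ω)`.
If the latter event has mass at most `ε`, the Lévy–Prokhorov distance is at most `ε`.
-/

section Coupling

open Metric

variable {Ω α : Type*} [MeasurableSpace Ω] [MeasurableSpace α] [PseudoEMetricSpace α]
  {μ : Measure Ω} {f g : Ω → α}

lemma map_apply_le_map_thickening_add (hf : AEMeasurable f μ) (hg : AEMeasurable g μ)
    (δ : ℝ) {B : Set α} (hB : MeasurableSet B) :
    μ.map f B ≤ μ.map g (thickening δ B) + μ {ω | ENNReal.ofReal δ ≤ edist (f ω) (g ω)} := by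
  have hsub : f ⁻¹' B ⊆
      g ⁻¹' thickening δ B ∪ {ω | ENNReal.ofReal δ ≤ edist (f ω) (g ω)} := by
    intro ω hω
    rcases lt_or_ge (edist (f ω) (g ω)) (ENNReal.ofReal δ) with hlt | hge
    · rw [edist_comm] at hlt
      exact .inl ((infEDist_le_edist_of_mem (Set.mem_preimage.mp hω)).trans_lt hlt)
    · exact .inr hge
  calc μ.map f B = μ (f ⁻¹' B) := Measure.map_apply_of_aemeasurable hf hB
    _ ≤ μ (g ⁻¹' thickening δ B) + μ {ω | ENNReal.ofReal δ ≤ edist (f ω) (g ω)} :=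
      (measure_mono hsub).trans (measure_union_le _ _)
    _ ≤ μ.map g (thickening δ B) + μ {ω | ENNReal.ofReal δ ≤ edist (f ω) (g ω)} := by
      gcongr
      exact Measure.le_map_apply hg _

lemma levyProkhorovEDist_map_le (hf : AEMeasurable f μ) (hg : AEMeasurable g μ) {ε : ENNReal}
    (hε : μ {ω | ε ≤ edist (f ω) (g ω)} ≤ ε) :
    levyProkhorovEDist (μ.map f) (μ.map g) ≤ ε := by
  rcases eq_or_ne ε ⊤ with rfl | htop
  · exact le_top
  refine sInf_le fun B hB ↦ ⟨?_, ?_⟩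
  · refine (map_apply_le_map_thickening_add hf hg ε.toReal hB).trans ?_
    rw [ENNReal.ofReal_toReal htop]
    gcongr
  · refine (map_apply_le_map_thickening_add hg hf ε.toReal hB).trans ?_
    simp only [ENNReal.ofReal_toReal htop, edist_comm (g _)]
    gcongr

end Coupling

lemma map_count_eq_sum_dirac {ι α : Type*} [Fintype ι] [MeasurableSpace ι] [MeasurableSpace α]
    {x : ι → α} (hx : Measurable x) :
    Measure.count.map x = ∑ i, Measure.dirac (x i) := by
  rw [Measure.count, Measure.sum_fintype, Measure.map_finset_sum' hx.aemeasurable]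
  simp only [Measure.map_dirac' hx]

theorem levyProkhorov_empirical_displacement_general {ι α : Type*} [Fintype ι]
    [MeasurableSpace α] [PseudoMetricSpace α] {ε : ℝ} (hε : 0 ≤ ε) (x y : ι → α)
    (h : ε < levyProkhorovDist
      ((Fintype.card ι : ENNReal)⁻¹ • ∑ i, Measure.dirac (x i))
      ((Fintype.card ι : ENNReal)⁻¹ • ∑ i, Measure.dirac (y i))) :
    (Fintype.card ι : ℝ) * ε < ((Finset.univ.filter fun i ↦ ε ≤ dist (x i) (y i)).card : ℝ) := by
  let _ : MeasurableSpace ι := ⊤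
  have hx : Measurable x := measurable_from_top
  have hy : Measurable y := measurable_from_top
  rw [← map_count_eq_sum_dirac hx, ← map_count_eq_sum_dirac hy, ← Measure.map_smul,
    ← Measure.map_smul] at h
  set far := Finset.univ.filter fun i ↦ ε ≤ dist (x i) (y i)
  have hfar : {i | ENNReal.ofReal ε ≤ edist (x i) (y i)} = (far : Set ι) := by
    ext i
    simp [far, edist_dist, ENNReal.ofReal_le_ofReal_iff dist_nonneg]
  have hmass : ENNReal.ofReal ε < far.card / Fintype.card ι := by
    contrapose! h
    refine ENNReal.toReal_le_of_le_ofReal hε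
      (levyProkhorovEDist_map_le hx.aemeasurable hy.aemeasurable ?_)
    rwa [hfar, Measure.smul_apply, Measure.count_apply_finset, smul_eq_mul, mul_comm,
      ← div_eq_mul_inv]
  have hcard := ENNReal.mul_lt_of_lt_div' hmass
  rwa [← ENNReal.ofReal_natCast, ← ENNReal.ofReal_natCast,
    ← ENNReal.ofReal_mul (Nat.cast_nonneg _),
    ENNReal.ofReal_lt_ofReal_iff_of_nonneg (by positivity)] at hcard

/-- If the Lévy–Prokhorov distance between the empirical measures of `x, y ∈ ℝ^n`
exceeds `ε`, then more than `nε` of the coordinates satisfy `|x_i − y_i| ≥ ε`. -/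
theorem levyProkhorov_empirical_displacement
    (n : ℕ) (hn : 1 ≤ n) (ε : ℝ) (hε : 0 < ε) (x y : Fin n → ℝ)
    (h : ε < levyProkhorovDist
      ((n : ENNReal)⁻¹ • ∑ i : Fin n, Measure.dirac (x i))
      ((n : ENNReal)⁻¹ • ∑ i : Fin n, Measure.dirac (y i))) :
    (n : ℝ) * ε < ((Finset.univ.filter fun i : Fin n => ε ≤ |x i - y i|).card : ℝ) := by
  simpa only [Fintype.card_fin, Real.dist_eq] using
    levyProkhorov_empirical_displacement_general hε.le x y (by rwa [Fintype.card_fin])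
end
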